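/- Let G be a finite simple gap-free graph with nonzero 4-path ideal I_4(G). If the minimal free resolution of the edge ideal I(G) is linear up to step p for some p ≥ 2 (that is, Tor_i^S(I(G),K)_j = 0 for all 1 ≤ i ≤ p and all j ≠ i + 2), then the minimal free resolution of I_4(G) is linear up to step p (that is, Tor_i^S(I_4(G),K)_j = 0 for all 1 ≤ i ≤ p and all j ≠ i + 4). In particular, if I(G) has a linear minimal free resolution, then so does I_4(G). -/

import Mathlib

open MvPolynomial

/-! Graph-theoretic definitions -/

/-- A list of vertices is a path in `G`: consecutive vertices are adjacent and all
vertices are distinct. -/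
def SimpleGraph.IsPathList {V : Type*} (G : SimpleGraph V) (l : List V) : Prop :=
  l.Chain' G.Adj ∧ l.Nodup

/-- The `t`-path ideal of a graph: the ideal generated by the monomials
`x_{v_1} ⋯ x_{v_t}` where `v_1 ⋯ v_t` is a path on `t` distinct vertices of `G`. -/
noncomputable def pathIdeal {V K : Type*} [CommRing K] (G : SimpleGraph V) (t : ℕ) :
    Ideal (MvPolynomial V K) :=
  Ideal.span { p | ∃ l : List V, G.IsPathList l ∧ l.length = t ∧ p = (l.map X).prod }

/-- The edge ideal of a graph. -/
noncomputable def edgeIdeal {V K : Type*} [CommRing K] (G : SimpleGraph V) :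
    Ideal (MvPolynomial V K) :=
  Ideal.span { p | ∃ u v, G.Adj u v ∧ p = X u * X v }

/-- `G` is gap-free: any two vertex-disjoint edges are joined by an edge. -/
def SimpleGraph.GapFree {V : Type*} (G : SimpleGraph V) : Prop :=
  ∀ a b c d : V, G.Adj a b → G.Adj c d → a ≠ c → a ≠ d → b ≠ c → b ≠ d →
    (G.Adj a c ∨ G.Adj a d ∨ G.Adj b c ∨ G.Adj b d)

/-- `G` is claw-free: it has no induced `K_{1,3}`. -/
def SimpleGraph.ClawFree {V : Type*} (G : SimpleGraph V) : Prop :=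
  ∀ v a b c : V, G.Adj v a → G.Adj v b → G.Adj v c → a ≠ b → a ≠ c → b ≠ c →
    (G.Adj a b ∨ G.Adj a c ∨ G.Adj b c)

/-- `G` is cricket-free: it has no induced cricket. -/
def SimpleGraph.CricketFree {V : Type*} (G : SimpleGraph V) : Prop :=
  ¬ ∃ w1 w2 w3 w4 w5 : V,
      w1 ≠ w2 ∧ w1 ≠ w3 ∧ w1 ≠ w4 ∧ w1 ≠ w5 ∧ w2 ≠ w3 ∧ w2 ≠ w4 ∧ w2 ≠ w5 ∧
      w3 ≠ w4 ∧ w3 ≠ w5 ∧ w4 ≠ w5 ∧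
      G.Adj w1 w3 ∧ G.Adj w2 w3 ∧ G.Adj w3 w4 ∧ G.Adj w3 w5 ∧ G.Adj w4 w5 ∧
      ¬ G.Adj w1 w2 ∧ ¬ G.Adj w1 w4 ∧ ¬ G.Adj w1 w5 ∧ ¬ G.Adj w2 w4 ∧ ¬ G.Adj w2 w5

/-- `w : Fin n → V` is an induced cycle of length `n` in `H`. -/
def SimpleGraph.IsInducedCycle {V : Type*} (H : SimpleGraph V) {n : ℕ} (w : Fin n → V) :
    Prop :=
  3 ≤ n ∧ Function.Injective w ∧
    ∀ i j : Fin n, H.Adj (w i) (w j) ↔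
      ((j : ℕ) = ((i : ℕ) + 1) % n ∨ (i : ℕ) = ((j : ℕ) + 1) % n)

/-- A graph is chordal if it has no induced cycle of length at least four. -/
def SimpleGraph.Chordal {V : Type*} (H : SimpleGraph V) : Prop :=
  ∀ (n : ℕ), 4 ≤ n → ∀ w : Fin n → V, ¬ H.IsInducedCycle w

/-! Monomial ideals, graded Betti numbers via the Taylor complex, and
Castelnuovo–Mumford regularity. -/

/-- The monomial ideal generated by the monomials with exponent vectors `gens`. -/
noncomputable def monomialSpan {V K : Type*} [CommRing K] {k : ℕ}
    (gens : Fin k → (V →₀ ℕ)) : Ideal (MvPolynomial V K) :=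
  Ideal.span (Set.range fun i => monomial (gens i) (1 : K))

/-- The total degree of an exponent vector. -/
def monomialDegree {V : Type*} (m : V →₀ ℕ) : ℕ := m.sum fun _ n => n

/-- `m` is a minimal monomial generator of the monomial ideal `I`. -/
def IsMinimalMonomialGen {V K : Type*} [CommRing K] (I : Ideal (MvPolynomial V K))
    (m : V →₀ ℕ) : Prop :=
  monomial m (1 : K) ∈ I ∧ ∀ m' : V →₀ ℕ, m' ≤ m → m' ≠ m → monomial m' (1 : K) ∉ I

/-- The lcm of the monomials `gens i`, `i ∈ T`. -/
noncomputable def taylorLcm {V : Type*} {k : ℕ} (gens : Fin k → (V →₀ ℕ))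
    (T : Finset (Fin k)) : V →₀ ℕ :=
  T.sup gens

open Classical in
/-- The boundary of a basis element of the Taylor complex of `gens`, tensored with the
residue field `K`: only the terms where the lcm is unchanged survive. -/
noncomputable def taylorBoundary {V K : Type*} [Field K] {k : ℕ}
    (gens : Fin k → (V →₀ ℕ)) (T : Finset (Fin k)) : Finset (Fin k) →₀ K :=
  ∑ t ∈ T, if taylorLcm gens (T.erase t) = taylorLcm gens T then
      ((-1 : K) ^ (T.filter fun s => s < t).card) • Finsupp.single (T.erase t) (1 : K)
    else 0

/-- The differential of the Taylor complex of `gens` tensored with `K`. -/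
noncomputable def taylorDiff {V K : Type*} [Field K] {k : ℕ}
    (gens : Fin k → (V →₀ ℕ)) : (Finset (Fin k) →₀ K) →ₗ[K] (Finset (Fin k) →₀ K) :=
  Finsupp.lsum K fun T =>
    LinearMap.toSpanSingleton K (Finset (Fin k) →₀ K) (taylorBoundary gens T)

/-- The graded piece of the Taylor complex in homological degree `i` and internal
degree `j`. -/
noncomputable def taylorPiece {V K : Type*} [Field K] {k : ℕ}
    (gens : Fin k → (V →₀ ℕ)) (i j : ℕ) : Submodule K (Finset (Fin k) →₀ K) :=
  Submodule.span K { f | ∃ T : Finset (Fin k), T.card = i ∧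
    monomialDegree (taylorLcm gens T) = j ∧ f = Finsupp.single T (1 : K) }

/-- Nonvanishing of the degree-`j` part of the `i`-th homology of the Taylor complex
of `gens` tensored with `K`; since the Taylor complex is a graded free resolution of
`S/I` (where `I` is the ideal generated by the monomials `gens`), this says exactly
that `Tor_i^S(S/I, K)_j ≠ 0`. -/
noncomputable def taylorHomologyNonzero {V K : Type*} [Field K] {k : ℕ}
    (gens : Fin k → (V →₀ ℕ)) (i j : ℕ) : Prop :=
  ¬ (LinearMap.ker (taylorDiff (K := K) gens) ⊓ taylorPiece (K := K) gens i j ≤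
      Submodule.map (taylorDiff (K := K) gens) (taylorPiece (K := K) gens (i + 1) j))

/-- For a monomial ideal `I`, `Tor_i^S(I, K)_j ≠ 0`.  (Since
`Tor_i^S(I,K) ≅ Tor_{i+1}^S(S/I,K)`, this is computed from the Taylor complex on any
family of monomial generators of `I`.) -/
def IdealTorNonzero {V K : Type*} [Field K] (I : Ideal (MvPolynomial V K))
    (i j : ℕ) : Prop :=
  ∃ (k : ℕ) (gens : Fin k → (V →₀ ℕ)), I = monomialSpan gens ∧
    taylorHomologyNonzero (K := K) gens (i + 1) j

/-- The Castelnuovo–Mumford regularity of a monomial ideal `I`: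
`reg I = max { j - i : Tor_i^S(I, K)_j ≠ 0 }`. -/
noncomputable def reg {V K : Type*} [Field K] (I : Ideal (MvPolynomial V K)) : ℕ :=
  sSup { d | ∃ i j : ℕ, IdealTorNonzero I i j ∧ d = j - i }

/-!
By Hochster's formula, obtained by comparing the Taylor and Koszul complexes inside their tensor
product, linearity of `I(G)` up to step `p` is the vanishing of certain reduced cohomology groups of
the restrictions of the independence complex of `G`, and linearity of `I_4(G)` is the vanishing of
the corresponding groups for the complex of the vertex sets containing no `4`-path. As `G` is
gap-free, these are the vertex sets `σ` in which any two edges meet. In the lowest dimensions the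
vanishing is clear, since every set of at most three vertices is one of them.

Filter this complex by the last edge of `σ` in a lexicographic order. The sets without an edge form
the independence complex. Those with last edge `uv` are the `{u, v} ∪ τ` with `τ` in the link of
`uv` and disjoint from the ends of later edges at `u` or `v`: such a later edge is the only way to
violate maximality, since every edge of `σ` meets `uv`. The link consists of the independent sets
`τ` whose neighbours of `u` or `v` all see only `u`, or all see only `v`, or are a single common
neighbour. Filter it by these alternatives. By gap-freeness all sets avoiding the neighbours of `u`
and `v` are independent and so form a full simplex; every other stratum is a restriction of the
independence complex with that simplex removed, and its cohomology vanishes in the required range.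
-/

section ChainComplex

open Finset

variable {ι κ α K : Type*} [CommRing K] {P Q L : Set (Finset ι)} {n : ℕ}

/-- The `K`-valued functions supported on the members of cardinality `n` of the family `P`. -/
def chains (K : Type*) [CommRing K] (P : Set (Finset ι)) (n : ℕ) :
    Submodule K (Finset ι → K) where
  carrier := {z | ∀ T, z T ≠ 0 → T ∈ P ∧ #T = n}
  add_mem' {z w} hz hw T hT := by
    by_cases h : z T = 0
    · exact hw T fun h' => hT (by simp [h, h'])
    · exact hz T h
  zero_mem' T hT := absurd rfl hT
  smul_mem' c z hz T hT := hz T (right_ne_zero_of_mul hT)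

lemma eq_zero_of_mem_chains {z : Finset ι → K} (hz : z ∈ chains K P n) {T : Finset ι}
    (hT : T ∉ P) : z T = 0 :=
  not_imp_comm.1 (fun h => (hz T h).1) hT

lemma chains_mono (h : P ⊆ Q) : chains K P n ≤ chains K Q n :=
  fun _ hz T hT => ⟨h (hz T hT).1, (hz T hT).2⟩

lemma indicator_mem_chains {z : Finset ι → K} (hz : z ∈ chains K Q n) :
    P.indicator z ∈ chains K P n := fun T hT =>
  have hTP := Set.mem_of_indicator_ne_zero hT
  ⟨hTP, (hz T (by rwa [Set.indicator_of_mem hTP] at hT)).2⟩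

lemma mem_chains_inter_of_eqOn_zero {z : Finset ι → K} (hz : z ∈ chains K P n)
    (h : Set.EqOn z 0 (P \ L)) : z ∈ chains K (P ∩ L) n := fun T hT =>
  have hTP := (hz T hT).1
  ⟨⟨hTP, by_contra fun hTL => hT (h ⟨hTP, hTL⟩)⟩, (hz T hT).2⟩

variable [LinearOrder ι]

/-- The sign with which the simplex `S` occurs in the simplicial boundary of `insert t S`. -/
def koszulSign (K : Type*) [CommRing K] (t : ι) (S : Finset ι) : K :=
  (-1) ^ #{s ∈ S | s < t}

lemma koszulSign_mul_self (t : ι) (S : Finset ι) :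
    koszulSign K t S * koszulSign K t S = 1 := by
  rw [koszulSign, ← mul_pow, neg_one_mul, neg_neg, one_pow]

lemma koszulSign_union_of_disjoint {S T : Finset ι} (h : Disjoint S T) (t : ι) :
    koszulSign K t (S ∪ T) = koszulSign K t S * koszulSign K t T := by
  rw [koszulSign, filter_union, card_union_of_disjoint (disjoint_filter_filter h), pow_add,
    koszulSign, koszulSign]

lemma koszulSign_insert {v : ι} {S : Finset ι} (hv : v ∉ S) (t : ι) :
    koszulSign K t (insert v S) = (if v < t then -1 else 1) * koszulSign K t S := by
  unfold koszulSign
  rw [filter_insert]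
  split_ifs
  · rw [card_insert_of_notMem (by simp [hv]), pow_succ']
  · rw [one_mul]

lemma koszulSign_map [LinearOrder κ] (f : κ ↪o ι) (t : κ) (S : Finset κ) :
    koszulSign K (f t) (S.map f.toEmbedding) = koszulSign K t S := by
  simp [koszulSign, filter_map]

lemma koszulSign_mul_koszulSign_insert {t v : ι} {S : Finset ι} (htv : t ≠ v)
    (ht : t ∉ S) (hv : v ∉ S) :
    koszulSign K t S * koszulSign K v (insert t S) =
      -(koszulSign K t (insert v S) * koszulSign K v S) := by
  rw [koszulSign_insert ht, koszulSign_insert hv]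
  rcases htv.lt_or_gt with h | h <;> simp [h, h.not_gt]

lemma koszulSign_insert_mul_koszulSign_insert {t v : ι} {S : Finset ι} (htv : t ≠ v)
    (ht : t ∉ S) (hv : v ∉ S) :
    koszulSign K t (insert v S) * koszulSign K v (insert t S) =
      -(koszulSign K t S * koszulSign K v S) := by
  rw [koszulSign_insert ht, koszulSign_insert hv]
  rcases htv.lt_or_gt with h | h <;> simp [h, h.not_gt]

section MapUnion

variable [LinearOrder κ] (f : κ ↪o ι) (U : Finset ι) {P : Set (Finset κ)}

/-- The embedding of the full simplex on `κ` as `F ↦ f(F) ∪ U` in the full simplex on `ι`. -/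
def mapUnion (F : Finset κ) : Finset ι := F.map f.toEmbedding ∪ U

/-- The sign by which `mapUnion f U` changes the simplicial boundary. -/
def mapUnionSign (K : Type*) [CommRing K] (F : Finset κ) : K := ∏ x ∈ F, koszulSign K (f x) U

lemma mapUnionSign_mul_self (F : Finset κ) :
    mapUnionSign f U K F * mapUnionSign f U K F = 1 := by
  rw [mapUnionSign, ← prod_mul_distrib]
  exact prod_eq_one fun x _ => koszulSign_mul_self _ _

variable {f U}

lemma card_mapUnion {F : Finset κ} (hF : Disjoint (F.map f.toEmbedding) U) :
    #(mapUnion f U F) = #F + #U := by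
  rw [mapUnion, card_union_of_disjoint hF, card_map]

lemma mapUnion_injOn (hP : ∀ F ∈ P, Disjoint (F.map f.toEmbedding) U) :
    Set.InjOn (mapUnion f U) P := fun F hF F' hF' h => by
  have := congrArg (· \ U) h
  simpa [mapUnion, union_sdiff_distrib, sdiff_eq_self_of_disjoint (hP F hF),
    sdiff_eq_self_of_disjoint (hP F' hF')] using this

lemma exists_insert_of_insert_mem_image (hP : ∀ F ∈ P, Disjoint (F.map f.toEmbedding) U)
    {F : Finset κ} (hF : F ∈ P) {t : ι} (ht : t ∉ mapUnion f U F)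
    (h : insert t (mapUnion f U F) ∈ mapUnion f U '' P) :
    ∃ x ∉ F, insert x F ∈ P ∧ f x = t := by
  obtain ⟨F', hF', h⟩ := h
  obtain ⟨htF, htU⟩ : t ∉ F.map f.toEmbedding ∧ t ∉ U := by simpa [mapUnion] using ht
  have hmap : F'.map f.toEmbedding = insert t (F.map f.toEmbedding) := by
    have := congrArg (· \ U) h
    simpa [mapUnion, union_sdiff_distrib, sdiff_eq_self_of_disjoint (hP F hF),
      sdiff_eq_self_of_disjoint (hP F' hF'), insert_sdiff_of_notMem _ htU] using this
  obtain ⟨x, -, rfl⟩ := mem_map.1 (hmap ▸ mem_insert_self t _)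
  have hxF : F' = insert x F := by
    rw [← map_inj (f := f.toEmbedding), hmap, map_insert]
  exact ⟨x, by simpa using htF, hxF ▸ hF', rfl⟩

lemma pullback_mem_chains (hP : ∀ F ∈ P, Disjoint (F.map f.toEmbedding) U) {z : Finset ι → K}
    (hz : z ∈ chains K (mapUnion f U '' P) (n + #U)) :
    (P.indicator fun F => mapUnionSign f U K F * z (mapUnion f U F)) ∈ chains K P n := by
  intro F hF
  have hFP := Set.mem_of_indicator_ne_zero hF
  rw [Set.indicator_of_mem hFP] at hF
  have := (hz _ (right_ne_zero_of_mul hF)).2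
  rw [card_mapUnion (hP F hFP)] at this
  exact ⟨hFP, by omega⟩

lemma exists_pullback_eq (hP : ∀ F ∈ P, Disjoint (F.map f.toEmbedding) U) {y : Finset κ → K}
    (hy : y ∈ chains K P n) :
    ∃ z ∈ chains K (mapUnion f U '' P) (n + #U),
      (P.indicator fun F => mapUnionSign f U K F * z (mapUnion f U F)) = y := by
  have hg := (mapUnion_injOn hP).leftInvOn_invFunOn
  set g := Function.invFunOn (mapUnion f U) P
  refine ⟨(mapUnion f U '' P).indicator fun T => mapUnionSign f U K (g T) * y (g T), ?_, ?_⟩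
  · intro T hT
    obtain ⟨F, hF, rfl⟩ := Set.mem_of_indicator_ne_zero hT
    rw [Set.indicator_of_mem (Set.mem_image_of_mem _ hF), hg hF] at hT
    exact ⟨⟨F, hF, rfl⟩, by
      rw [card_mapUnion (hP F hF), (hy F (right_ne_zero_of_mul hT)).2]⟩
  · ext F
    by_cases hF : F ∈ P
    · rw [Set.indicator_of_mem hF, Set.indicator_of_mem (Set.mem_image_of_mem _ hF), hg hF,
        ← mul_assoc, mapUnionSign_mul_self, one_mul]
    · rw [Set.indicator_of_notMem hF, eq_zero_of_mem_chains hy hF]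

end MapUnion

variable [Fintype ι]

/-- The simplicial boundary operator on `K`-valued functions on the full simplex with vertex set
`ι`, the empty simplex included. -/
def boundary (K : Type*) [CommRing K] : (Finset ι → K) →ₗ[K] (Finset ι → K) where
  toFun z S := ∑ t ∈ Sᶜ, koszulSign K t S * z (insert t S)
  map_add' z w := by
    ext S
    simp [mul_add, sum_add_distrib]
  map_smul' c z := by
    ext S
    simp [mul_sum, mul_left_comm]

lemma boundary_apply (z : Finset ι → K) (S : Finset ι) :
    boundary K z S = ∑ t ∈ Sᶜ, koszulSign K t S * z (insert t S) := rfl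

lemma boundary_congr {z w : Finset ι → K} {S : Finset ι}
    (h : ∀ t ∉ S, z (insert t S) = w (insert t S)) : boundary K z S = boundary K w S :=
  sum_congr rfl fun t ht => by rw [h t (mem_compl.1 ht)]

lemma boundary_eq_zero {z : Finset ι → K} {S : Finset ι} (h : ∀ t ∉ S, z (insert t S) = 0) :
    boundary K z S = 0 :=
  sum_eq_zero fun t ht => by rw [h t (mem_compl.1 ht), mul_zero]

theorem boundary_boundary (z : Finset ι → K) : boundary K (boundary K z) = 0 := by
  ext S
  simp_rw [boundary_apply, mul_sum, sum_sigma', Pi.zero_apply]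
  refine sum_involution (fun a _ => ⟨a.2, a.1⟩) ?_ ?_ ?_ fun _ _ => rfl <;>
    rintro ⟨t, s⟩ h <;>
    obtain ⟨ht, hst, hs⟩ : t ∉ S ∧ s ≠ t ∧ s ∉ S := by simpa using h
  · dsimp only
    rw [insert_comm s t S]
    linear_combination z (insert t (insert s S)) *
      koszulSign_mul_koszulSign_insert (K := K) hst.symm ht hs
  · exact fun _ h => hst (congrArg Sigma.fst h)
  · simp [ht, hs, hst.symm]

lemma boundary_apply_eq_zero_of_card_ne {z : Finset ι → K} (hz : z ∈ chains K P n)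
    {S : Finset ι} (hS : #S + 1 ≠ n) : boundary K z S = 0 :=
  boundary_eq_zero fun t ht => by
    by_contra h
    exact hS (card_insert_of_notMem ht ▸ (hz _ h).2)

lemma boundary_mem_chains {z : Finset ι → K} (hz : z ∈ chains K P (n + 1)) :
    boundary K z ∈ chains K Set.univ n := fun _ hT =>
  ⟨trivial, by_contra fun h => hT (boundary_apply_eq_zero_of_card_ne hz (by omega))⟩

lemma boundary_indicator_boundary (hP : P.OrdConnected) {w : Finset ι → K}
    (hw : w ∈ chains K P n) :
    Set.EqOn (boundary K (P.indicator (boundary K w))) 0 P := by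
  intro S hS
  rw [← boundary_boundary w]
  refine boundary_congr fun t _ => ?_
  by_cases ht : insert t S ∈ P
  · rw [Set.indicator_of_mem ht]
  · rw [Set.indicator_of_notMem ht]
    refine (boundary_eq_zero fun s _ => eq_zero_of_mem_chains hw fun hs => ht ?_).symm
    exact hP.out hS hs ⟨subset_insert t S, subset_insert s _⟩

lemma boundary_eqOn_zero_of_isLowerSet (hL : IsLowerSet L) {z : Finset ι → K}
    (hz : z ∈ chains K (P ∩ L) n) : Set.EqOn (boundary K z) 0 (P \ L) := fun S hS =>
  boundary_eq_zero fun t _ => eq_zero_of_mem_chains hz fun h => hS.2 (hL (subset_insert t S) h.2)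

lemma boundary_indicator_eqOn_of_isLowerSet (hL : IsLowerSet L) {z : Finset ι → K}
    (hz : z ∈ chains K P n) :
    Set.EqOn (boundary K ((P \ L).indicator z)) (boundary K z) (P \ L) := fun S hS =>
  boundary_congr fun t _ => by
    have htL : insert t S ∉ L := fun h => hS.2 (hL (subset_insert t S) h)
    by_cases ht : insert t S ∈ P
    · rw [Set.indicator_of_mem (show insert t S ∈ P \ L from ⟨ht, htL⟩)]
    · rw [eq_zero_of_mem_chains hz ht, Set.indicator_apply_eq_zero]
      exact fun h => absurd h.1 ht

/-- Exactness in cardinality `n` of the complex spanned by the members of the family `P`, whose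
differential is the simplicial boundary followed by restriction to `P`. For `P` order-connected
this is a complex; for `P` a simplicial complex, exactness in cardinality `n` is the vanishing of
the reduced homology in dimension `n - 1`. -/
def ExactAt (K : Type*) [CommRing K] (P : Set (Finset ι)) (n : ℕ) : Prop :=
  ∀ z ∈ chains K P n, Set.EqOn (boundary K z) 0 P →
    ∃ w ∈ chains K P (n + 1), Set.EqOn (boundary K w) z P

namespace ExactAt

theorem of_inter_of_diff (hP : P.OrdConnected) (hL : IsLowerSet L)
    (hPL : ExactAt K (P ∩ L) n) (hPdL : ExactAt K (P \ L) n) : ExactAt K P n := by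
  intro z hz hz0
  obtain ⟨w, hw, hwz⟩ := hPdL _ (indicator_mem_chains hz)
    ((boundary_indicator_eqOn_of_isLowerSet hL hz).trans (hz0.mono Set.sdiff_subset))
  have hwP := chains_mono Set.sdiff_subset hw
  have hres : z - P.indicator (boundary K w) ∈ chains K (P ∩ L) n :=
    mem_chains_inter_of_eqOn_zero
      (sub_mem hz (indicator_mem_chains (boundary_mem_chains hw))) fun S hS => by
        simp [hS.1, hwz hS, Set.indicator_of_mem hS]
  obtain ⟨y, hy, hyz⟩ := hPL _ hres fun S hS => by
    simp [hz0 hS.1, boundary_indicator_boundary hP hwP hS.1]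
  refine ⟨y + w, add_mem (chains_mono Set.inter_subset_left hy) hwP, fun S hS => ?_⟩
  rw [map_add, Pi.add_apply]
  by_cases hSL : S ∈ L
  · simp [hyz ⟨hS, hSL⟩, hS]
  · rw [boundary_eqOn_zero_of_isLowerSet hL hy ⟨hS, hSL⟩, hwz ⟨hS, hSL⟩,
      Set.indicator_of_mem (show S ∈ P \ L from ⟨hS, hSL⟩), Pi.zero_apply, zero_add]

theorem inter (hP : P.OrdConnected) (hL : IsLowerSet L)
    (h : ExactAt K P n) (hPdL : ExactAt K (P \ L) (n + 1)) : ExactAt K (P ∩ L) n := by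
  intro z hz hz0
  have hzL := boundary_eqOn_zero_of_isLowerSet hL hz
  obtain ⟨w, hw, hwz⟩ := h z (chains_mono Set.inter_subset_left hz) fun S hS => by
    by_cases hSL : S ∈ L
    · exact hz0 ⟨hS, hSL⟩
    · exact hzL ⟨hS, hSL⟩
  obtain ⟨y, hy, hyw⟩ := hPdL _ (indicator_mem_chains hw) fun S hS => by
    rw [boundary_indicator_eqOn_of_isLowerSet hL hw hS, hwz hS.1]
    exact eq_zero_of_mem_chains hz fun h => hS.2 h.2
  have hyP := chains_mono Set.sdiff_subset hy
  refine ⟨w - P.indicator (boundary K y), mem_chains_inter_of_eqOn_zero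
    (sub_mem hw (indicator_mem_chains (boundary_mem_chains hy))) fun S hS => ?_, fun S hS => ?_⟩
  · simp [hS.1, hyw hS, Set.indicator_of_mem hS]
  · simp [hwz hS.1, boundary_indicator_boundary hP hyP hS.1]

theorem diff (hP : P.OrdConnected) (hL : IsLowerSet L)
    (h : ExactAt K P n) (hPL : ∀ k, k + 1 = n → ExactAt K (P ∩ L) k) :
    ExactAt K (P \ L) n := by
  intro z hz hz0
  have hzP := chains_mono Set.sdiff_subset hz
  obtain ⟨w, hw, hwz⟩ : ∃ w ∈ chains K (P ∩ L) n,
      Set.EqOn (boundary K w) (boundary K z) (P ∩ L) := by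
    cases n with
    | zero =>
      refine ⟨0, zero_mem _, fun S _ => ?_⟩
      rw [boundary_apply_eq_zero_of_card_ne hz (Nat.succ_ne_zero _), map_zero, Pi.zero_apply]
    | succ k =>
      have hmem : P.indicator (boundary K z) ∈ chains K (P ∩ L) k :=
        mem_chains_inter_of_eqOn_zero (indicator_mem_chains (boundary_mem_chains hz))
          fun S hS => by simp [hS.1, hz0 hS]
      obtain ⟨w, hw, hwz⟩ := hPL k rfl _ hmem
        fun S hS => boundary_indicator_boundary hP hzP hS.1
      exact ⟨w, hw, fun S hS => by rw [hwz hS, Set.indicator_of_mem hS.1]⟩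
  obtain ⟨y, hy, hyz⟩ := h (z - w) (sub_mem hzP (chains_mono Set.inter_subset_left hw))
    fun S hS => by
      by_cases hSL : S ∈ L
      · simp [hwz ⟨hS, hSL⟩]
      · simp [hz0 ⟨hS, hSL⟩, boundary_eqOn_zero_of_isLowerSet hL hw ⟨hS, hSL⟩]
  refine ⟨(P \ L).indicator y, indicator_mem_chains hy, fun S hS => ?_⟩
  rw [boundary_indicator_eqOn_of_isLowerSet hL hy hS, hyz hS.1, Pi.sub_apply,
    eq_zero_of_mem_chains hw fun h => hS.2 h.2, sub_zero]

theorem of_card_ne (h : ∀ T ∈ P, #T ≠ n) : ExactAt K P n := fun z hz _ =>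
  ⟨0, zero_mem _, fun S hS => by
    rw [map_zero, Pi.zero_apply]
    exact (not_imp_comm.1 (fun hzS => (hz S hzS).2) (h S hS)).symm⟩

theorem of_forall_insert (v : ι) (hv : ∀ F, v ∉ F → (F ∈ P ↔ insert v F ∈ P)) :
    ExactAt K P n := by
  intro z hz hz0
  refine ⟨fun T => if v ∈ T then koszulSign K v (T.erase v) * z (T.erase v) else 0,
    fun T hT => ?_, fun S hS => ?_⟩
  · obtain ⟨hvT, hT⟩ := ite_ne_right_iff.1 hT
    obtain ⟨hP, hcard⟩ := hz _ (right_ne_zero_of_mul hT)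
    rw [hv _ (notMem_erase v T), insert_erase hvT] at hP
    exact ⟨hP, by rw [← hcard, card_erase_add_one hvT]⟩
  · by_cases hvS : v ∈ S
    · obtain ⟨F, hvF, rfl⟩ : ∃ F, v ∉ F ∧ insert v F = S :=
        ⟨S.erase v, notMem_erase v S, insert_erase hvS⟩
      have hcycle := hz0 ((hv F hvF).2 hS)
      have hcompl : Fᶜ = insert v (insert v F)ᶜ := by
        rw [compl_insert, insert_erase (mem_compl.2 hvF)]
      rw [boundary_apply, hcompl, sum_insert (by simp), Pi.zero_apply] at hcycle
      have hterm : ∀ t ∈ (insert v F)ᶜ, koszulSign K t (insert v F) *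
            (if v ∈ insert t (insert v F) then
              koszulSign K v ((insert t (insert v F)).erase v) *
                z ((insert t (insert v F)).erase v) else 0) =
          -koszulSign K v F * (koszulSign K t F * z (insert t F)) := by
        intro t ht
        obtain ⟨htv, htF⟩ : t ≠ v ∧ t ∉ F := by simpa using ht
        rw [if_pos (by simp), erase_insert_of_ne htv, erase_insert hvF]
        linear_combination z (insert t F) *
          koszulSign_insert_mul_koszulSign_insert (K := K) htv htF hvF
      rw [boundary_apply, sum_congr rfl hterm, ← mul_sum]
      linear_combination (-koszulSign K v F) * hcycle +
        z (insert v F) * koszulSign_mul_self (K := K) v F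
    · rw [boundary_apply, sum_eq_single_of_mem v (by simpa using hvS)
        fun t _ htv => by simp [hvS, htv.symm]]
      simp [erase_insert hvS, ← mul_assoc, koszulSign_mul_self]

theorem of_fibers [PartialOrder α] (hP : P.OrdConnected) {ρ : Finset ι → α} (hρ : Monotone ρ)
    (h : ∀ a, ExactAt K {S ∈ P | ρ S = a} n) : ExactAt K P n := by
  induction P using WellFoundedLT.induction with
  | ind P ih =>
    rcases P.eq_empty_or_nonempty with rfl | hne
    · exact of_card_ne (by simp)
    obtain ⟨a, ⟨S, hSP, rfl⟩, hmax⟩ := (P.toFinite.image ρ).exists_maximal (hne.image ρ)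
    have hL : IsLowerSet {T | ¬ρ S ≤ ρ T} := fun T T' hle hT h => hT (h.trans (hρ hle))
    refine of_inter_of_diff hP hL (ih _ ⟨Set.inter_subset_left, fun hle => ?_⟩ ?_ fun b => ?_) ?_
    · exact (hle hSP).2 le_rfl
    · exact hP.inter hL.ordConnected
    · by_cases hb : ρ S ≤ b
      · exact of_card_ne fun T hT => absurd (hT.2 ▸ hb) hT.1.2
      · convert h b using 2
        grind
    · convert h (ρ S) using 1
      ext T
      simp only [Set.mem_sdiff, Set.mem_ofPred_eq, not_not]
      exact and_congr_right fun hT => ⟨fun h => (hmax ⟨T, hT, rfl⟩ h).antisymm h, Eq.ge⟩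

theorem congr_card (hPQ : ∀ T, n ≤ #T + 1 → #T ≤ n + 1 → (T ∈ P ↔ T ∈ Q))
    (h : ExactAt K P n) : ExactAt K Q n := by
  intro z hz hz0
  obtain ⟨w, hw, hwz⟩ := h z
    (fun T hT => ⟨(hPQ T (by have := (hz T hT).2; omega) (by have := (hz T hT).2; omega)).2
      (hz T hT).1, (hz T hT).2⟩) fun S hS => by
      by_cases hn : #S + 1 = n
      · exact hz0 ((hPQ S (by omega) (by omega)).1 hS)
      · exact boundary_apply_eq_zero_of_card_ne hz hn
  refine ⟨w, fun T hT => ⟨(hPQ T (by have := (hw T hT).2; omega) (hw T hT).2.le).1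
    (hw T hT).1, (hw T hT).2⟩, fun S hS => ?_⟩
  by_cases hn : #S = n
  · exact hwz ((hPQ S (by omega) (by omega)).2 hS)
  · rw [boundary_apply_eq_zero_of_card_ne hw (by omega)]
    exact (not_imp_comm.1 (fun hzS => (hz S hzS).2) hn).symm

end ExactAt

section MapUnion

variable [Fintype κ] [LinearOrder κ] {f : κ ↪o ι} {U : Finset ι} {P : Set (Finset κ)}

lemma boundary_mapUnion (hP : ∀ F ∈ P, Disjoint (F.map f.toEmbedding) U) {z : Finset ι → K}
    (hz : z ∈ chains K (mapUnion f U '' P) n) {F : Finset κ} (hF : F ∈ P) :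
    boundary K (P.indicator fun F => mapUnionSign f U K F * z (mapUnion f U F)) F =
      mapUnionSign f U K F * boundary K z (mapUnion f U F) := by
  classical
  rw [boundary_apply, boundary_apply, mul_sum,
    ← sum_filter_of_ne (p := fun x => insert x F ∈ P) fun x _ h =>
      Set.mem_of_indicator_ne_zero (right_ne_zero_of_mul h)]
  refine sum_of_injOn f f.injective.injOn (fun x hx => ?_) (fun t ht htx => ?_) fun x hx => ?_
  · obtain ⟨hxF, hxP⟩ : x ∉ F ∧ insert x F ∈ P := by simpa using hx
    have := disjoint_left.1 (hP _ hxP) (mem_map_of_mem f.toEmbedding (mem_insert_self x F))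
    simpa [mapUnion, hxF] using this
  · rw [eq_zero_of_mem_chains hz, mul_zero, mul_zero]
    intro h
    obtain ⟨x, hxF, hxP, rfl⟩ := exists_insert_of_insert_mem_image hP hF (mem_compl.1 ht) h
    exact htx ⟨x, by simp [hxF, hxP], rfl⟩
  · obtain ⟨hxF, hxP⟩ : x ∉ F ∧ insert x F ∈ P := by simpa using hx
    have hinsert : mapUnion f U (insert x F) = insert (f x) (mapUnion f U F) := by
      simp [mapUnion]
    have hsign : mapUnionSign f U K (insert x F) = koszulSign K (f x) U * mapUnionSign f U K F :=
      prod_insert hxF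
    have hmap : koszulSign K (f x) (mapUnion f U F) = koszulSign K x F * koszulSign K (f x) U := by
      rw [mapUnion, koszulSign_union_of_disjoint (hP F hF), koszulSign_map]
    rw [Set.indicator_of_mem hxP, hinsert, hsign, hmap]
    ring

theorem exactAt_image_mapUnion_iff (hP : ∀ F ∈ P, Disjoint (F.map f.toEmbedding) U) :
    ExactAt K (mapUnion f U '' P) (n + #U) ↔ ExactAt K P n := by
  constructor
  · intro h y hy hy0
    obtain ⟨z, hz, rfl⟩ := exists_pullback_eq hP hy
    obtain ⟨w, hw, hwz⟩ := h z hz <| Set.forall_mem_image.2 fun F hF => by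
      have := boundary_mapUnion hP hz hF
      rw [hy0 hF, Pi.zero_apply] at this
      rw [Pi.zero_apply]
      linear_combination (-mapUnionSign f U K F) * this -
        boundary K z (mapUnion f U F) * mapUnionSign_mul_self (K := K) f U F
    rw [add_right_comm] at hw
    refine ⟨_, pullback_mem_chains hP hw, fun F hF => ?_⟩
    rw [boundary_mapUnion hP hw hF, hwz ⟨F, hF, rfl⟩, Set.indicator_of_mem hF]
  · intro h z hz hz0
    obtain ⟨y, hy, hyz⟩ := h _ (pullback_mem_chains hP hz) fun F hF => by
      rw [boundary_mapUnion hP hz hF, hz0 ⟨F, hF, rfl⟩, Pi.zero_apply, mul_zero, Pi.zero_apply]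
    obtain ⟨w, hw, rfl⟩ := exists_pullback_eq hP hy
    rw [add_right_comm] at hw
    refine ⟨w, hw, Set.forall_mem_image.2 fun F hF => ?_⟩
    have := hyz hF
    rw [boundary_mapUnion hP hw hF, Set.indicator_of_mem hF] at this
    linear_combination mapUnionSign f U K F * this +
      (z (mapUnion f U F) - boundary K w (mapUnion f U F)) *
        mapUnionSign_mul_self (K := K) f U F

/-- If the part of `P` lying over each `T ∉ A` is a cone and the part lying over `A` is a copy of
a family on `κ`, only the latter contributes to homology. -/
theorem exactAt_iff_exactAt_of_preimage {P : Set (Finset ι)} (hP : P.OrdConnected)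
    {A : Set (Finset κ)} (hA : IsUpperSet A)
    (hmap : ∀ S ∈ P, S.preimage f f.injective.injOn ∈ A →
      (S.preimage f f.injective.injOn).map f.toEmbedding = S)
    (hcone : ∀ T ∉ A, ∃ x ∉ Set.range f, ∀ S, S.preimage f f.injective.injOn = T → x ∉ S →
      (S ∈ P ↔ insert x S ∈ P)) :
    ExactAt K P n ↔ ExactAt K {T ∈ A | T.map f.toEmbedding ∈ P} n := by
  set ρ : Finset ι → Finset κ := fun S => S.preimage f f.injective.injOn
  have hρ : Monotone ρ := monotone_preimage f.injective
  have hρ_map : ∀ T, ρ (T.map f.toEmbedding) = T := fun T => by ext; simp [ρ]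
  have hL : IsLowerSet {S | ρ S ∉ A} := fun S S' hle hS h => hS (hA (hρ hle) h)
  have hPL : ∀ n, ExactAt K (P ∩ {S | ρ S ∉ A}) n := fun n => by
    refine .of_fibers (hP.inter hL.ordConnected) hρ fun T => ?_
    by_cases hT : T ∈ A
    · exact .of_card_ne fun S hS => absurd (hS.2 ▸ hT) hS.1.2
    obtain ⟨x, hx, hcone⟩ := hcone T hT
    have hρx : ∀ S, ρ (insert x S) = ρ S := fun S => by
      ext y
      have : f y ≠ x := fun h => hx ⟨y, h⟩
      simp [ρ, this]
    refine .of_forall_insert x fun S hxS => ?_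
    simp only [Set.mem_ofPred_eq, Set.mem_inter_iff, hρx]
    by_cases hS : ρ S = T
    · rw [hcone S hS hxS]
    · simp [hS]
  have himage : P \ {S | ρ S ∉ A} = mapUnion f ∅ '' {T ∈ A | T.map f.toEmbedding ∈ P} := by
    ext S
    simp only [Set.mem_sdiff, Set.mem_ofPred_eq, not_not, Set.mem_image, mapUnion, union_empty]
    constructor
    · rintro ⟨hSP, hSA⟩
      have hS := hmap S hSP hSA
      exact ⟨ρ S, ⟨hSA, hS.symm ▸ hSP⟩, hS⟩
    · rintro ⟨T, ⟨hTA, hTP⟩, rfl⟩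
      exact ⟨hTP, (hρ_map T).symm ▸ hTA⟩
  rw [← exactAt_image_mapUnion_iff (f := f) (U := ∅) (by simp), ← himage, card_empty, add_zero]
  exact ⟨fun h => h.diff hP hL fun k _ => hPL k, .of_inter_of_diff hP hL (hPL n)⟩

end MapUnion

end ChainComplex

section TaylorKoszul

open Finset

variable {V κ K : Type*}

/-- The exponent vector of the squarefree monomial `∏ v ∈ F, x_v`. -/
noncomputable def squarefreeExponent (F : Finset V) : V →₀ ℕ := Finsupp.indicator F fun _ _ => 1

lemma squarefreeExponent_apply [DecidableEq V] (F : Finset V) (v : V) :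
    squarefreeExponent F v = if v ∈ F then 1 else 0 := by
  simp [squarefreeExponent, Finsupp.indicator_apply]

lemma squarefreeExponent_empty : squarefreeExponent (∅ : Finset V) = 0 := by
  classical
  ext v
  simp [squarefreeExponent_apply]

lemma squarefreeExponent_le_iff {F : Finset V} {m : V →₀ ℕ} :
    squarefreeExponent F ≤ m ↔ F ⊆ m.support := by
  classical
  refine ⟨fun h v hv => ?_, fun h v => ?_⟩
  · have := h v
    rw [squarefreeExponent_apply, if_pos hv] at this
    exact Finsupp.mem_support_iff.2 (by omega)
  · rw [squarefreeExponent_apply]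
    split_ifs with hv
    · exact Nat.one_le_iff_ne_zero.2 (Finsupp.mem_support_iff.1 (h hv))
    · exact Nat.zero_le _

lemma squarefreeExponent_mono : Monotone (squarefreeExponent (V := V)) := fun F F' h v => by
  classical
  simp only [squarefreeExponent_apply]
  split_ifs with h₁ h₂ <;> grind

lemma eq_empty_of_squarefreeExponent_add_le {F : Finset V} {m m' : V →₀ ℕ} (hm : m ≤ m')
    (h : squarefreeExponent F + m' ≤ m) : F = ∅ := by
  classical
  refine eq_empty_of_forall_notMem fun v hv => ?_
  have := h v
  rw [Finsupp.add_apply, squarefreeExponent_apply, if_pos hv] at this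
  have := hm v
  omega

variable [LinearOrder V] [LinearOrder κ]

/-- The inclusion of the first summand into a lexicographic sum. -/
def inlLex : V ↪o V ⊕ₗ κ := .ofStrictMono _ Sum.Lex.inl_strictMono

/-- The inclusion of the second summand into a lexicographic sum. -/
def inrLex : κ ↪o V ⊕ₗ κ := .ofStrictMono _ Sum.Lex.inr_strictMono

lemma inlLex_ne_inrLex (v : V) (i : κ) : (inlLex v : V ⊕ₗ κ) ≠ inrLex i :=
  fun h => Sum.inl_ne_inr (toLex.injective h)

lemma inlLex_or_inrLex (x : V ⊕ₗ κ) : (∃ v, inlLex v = x) ∨ ∃ i, inrLex i = x :=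
  match x with
  | Sum.inlₗ v => .inl ⟨v, rfl⟩
  | Sum.inrₗ i => .inr ⟨i, rfl⟩

/-- The elements of `S` in the first summand. -/
noncomputable def leftPart (S : Finset (V ⊕ₗ κ)) : Finset V :=
  S.preimage inlLex inlLex.injective.injOn

/-- The elements of `S` in the second summand. -/
noncomputable def rightPart (S : Finset (V ⊕ₗ κ)) : Finset κ :=
  S.preimage inrLex inrLex.injective.injOn

lemma leftPart_mono : Monotone (leftPart (V := V) (κ := κ)) := monotone_preimage inlLex.injective

lemma rightPart_mono : Monotone (rightPart (V := V) (κ := κ)) := monotone_preimage inrLex.injective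

lemma leftPart_insert_inlLex [DecidableEq (V ⊕ₗ κ)] (v : V) (S : Finset (V ⊕ₗ κ)) :
    leftPart (insert (inlLex v) S) = insert v (leftPart S) := by
  ext; simp [leftPart]

lemma rightPart_insert_inlLex [DecidableEq (V ⊕ₗ κ)] (v : V) (S : Finset (V ⊕ₗ κ)) :
    rightPart (insert (inlLex v) S) = rightPart S := by
  ext; simp [rightPart, (inlLex_ne_inrLex _ _).symm]

lemma leftPart_insert_inrLex [DecidableEq (V ⊕ₗ κ)] (i : κ) (S : Finset (V ⊕ₗ κ)) :
    leftPart (insert (inrLex i) S) = leftPart S := by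
  ext; simp [leftPart, inlLex_ne_inrLex]

lemma rightPart_insert_inrLex [DecidableEq (V ⊕ₗ κ)] (i : κ) (S : Finset (V ⊕ₗ κ)) :
    rightPart (insert (inrLex i) S) = insert i (rightPart S) := by
  ext; simp [rightPart]

lemma leftPart_map_inlLex (F : Finset V) :
    leftPart (F.map (inlLex (κ := κ)).toEmbedding) = F := by
  ext; simp [leftPart]

lemma rightPart_map_inlLex (F : Finset V) :
    rightPart (F.map (inlLex (κ := κ)).toEmbedding) = ∅ := by
  ext; simp [rightPart, inlLex_ne_inrLex]

lemma leftPart_map_inrLex (T : Finset κ) :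
    leftPart (T.map (inrLex (V := V)).toEmbedding) = ∅ := by
  ext; simp [leftPart, (inlLex_ne_inrLex _ _).symm]

lemma rightPart_map_inrLex (T : Finset κ) :
    rightPart (T.map (inrLex (V := V)).toEmbedding) = T := by
  ext; simp [rightPart]

lemma map_leftPart_of_rightPart_eq_empty {S : Finset (V ⊕ₗ κ)} (h : rightPart S = ∅) :
    (leftPart S).map (inlLex (κ := κ)).toEmbedding = S := by
  ext x
  obtain ⟨v, rfl⟩ | ⟨i, rfl⟩ := inlLex_or_inrLex x
  · simp [leftPart]
  · have : inrLex i ∉ S := fun hi => notMem_empty i (h ▸ mem_preimage.2 hi)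
    simp [this, inlLex_ne_inrLex]

lemma map_rightPart_of_leftPart_eq_empty {S : Finset (V ⊕ₗ κ)} (h : leftPart S = ∅) :
    (rightPart S).map (inrLex (V := V)).toEmbedding = S := by
  ext x
  obtain ⟨v, rfl⟩ | ⟨i, rfl⟩ := inlLex_or_inrLex x
  · have : inlLex v ∉ S := fun hv => notMem_empty v (h ▸ mem_preimage.2 hv)
    simp [this, (inlLex_ne_inrLex _ _).symm]
  · simp [rightPart]

/-- The degree-`m` strand of the tensor product of the Koszul complex with the Taylor complex of
`gens`: its basis consists of the pairs `(F, T)` with `x^F * lcm(T)` dividing `x^m`. -/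
def taylorKoszulFamily (gens : κ → V →₀ ℕ) (m : V →₀ ℕ) : Set (Finset (V ⊕ₗ κ)) :=
  {S | squarefreeExponent (leftPart S) + (rightPart S).sup gens ≤ m}

variable (gens : κ → V →₀ ℕ) (m : V →₀ ℕ)

lemma isLowerSet_taylorKoszulFamily : IsLowerSet (taylorKoszulFamily gens m) :=
  fun _ _ hle h => (add_le_add (squarefreeExponent_mono (leftPart_mono hle))
    (sup_mono (rightPart_mono hle))).trans h

variable [Fintype V] [Fintype κ] [CommRing K] {n : ℕ}

theorem exactAt_taylorKoszulFamily_iff_taylor :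
    ExactAt K (taylorKoszulFamily gens m) n ↔ ExactAt K {T : Finset κ | T.sup gens = m} n := by
  have hP := isLowerSet_taylorKoszulFamily gens m
  have hA : IsUpperSet {T : Finset κ | m ≤ T.sup gens} := fun T T' hle h =>
    show m ≤ T'.sup gens from le_trans h (sup_mono hle)
  rw [exactAt_iff_exactAt_of_preimage (f := inrLex) hP.ordConnected hA (fun S hS hSA => ?_)
    fun T hT => ?_]
  · congr! with T
    simp only [taylorKoszulFamily, Set.mem_ofPred_eq, leftPart_map_inrLex, rightPart_map_inrLex,
      squarefreeExponent_empty, zero_add]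
    rw [le_antisymm_iff, and_comm]
  · exact map_rightPart_of_leftPart_eq_empty (eq_empty_of_squarefreeExponent_add_le hSA hS)
  · obtain ⟨v, hv⟩ : ∃ v, ¬m v ≤ T.sup gens v := not_forall.1 hT
    refine ⟨inlLex v, fun ⟨i, hi⟩ => inlLex_ne_inrLex v i hi.symm, fun S hST _ =>
      ⟨fun hS u => ?_, hP (subset_insert _ S)⟩⟩
    have hu := hS u
    change rightPart S = T at hST
    rw [leftPart_insert_inlLex, rightPart_insert_inlLex]
    simp only [Finsupp.add_apply, squarefreeExponent_apply, mem_insert, hST] at hu ⊢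
    grind

theorem exactAt_taylorKoszulFamily_iff_koszul :
    ExactAt K (taylorKoszulFamily gens m) n ↔
      ExactAt K {F | (¬∃ i, gens i ≤ m - squarefreeExponent F) ∧ squarefreeExponent F ≤ m} n := by
  have hP := isLowerSet_taylorKoszulFamily gens m
  rw [exactAt_iff_exactAt_of_preimage (f := inlLex)
    (A := {F | ¬∃ i, gens i ≤ m - squarefreeExponent F}) hP.ordConnected
    (fun F F' hle h ⟨i, hi⟩ =>
      h ⟨i, hi.trans (tsub_le_tsub_left (squarefreeExponent_mono hle) m)⟩)
    (fun S hS hSA => ?_) fun F hF => ?_]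
  · congr! with F
    simp only [taylorKoszulFamily, Set.mem_ofPred_eq, leftPart_map_inlLex, rightPart_map_inlLex,
      sup_empty, bot_eq_zero, add_zero]
  · refine map_leftPart_of_rightPart_eq_empty (eq_empty_of_forall_notMem fun i hi => hSA ⟨i, ?_⟩)
    exact (le_sup hi).trans (le_tsub_of_add_le_left hS)
  · obtain ⟨i, hi⟩ := not_not.1 hF
    refine ⟨inrLex i, fun ⟨v, hv⟩ => inlLex_ne_inrLex v i hv, fun S hSF _ =>
      ⟨fun hS u => ?_, hP (subset_insert _ S)⟩⟩
    have hu := hS u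
    have hiu := hi u
    change leftPart S = F at hSF
    rw [leftPart_insert_inrLex, rightPart_insert_inrLex, sup_insert]
    simp only [Finsupp.add_apply, Finsupp.tsub_apply, Finsupp.sup_apply, hSF] at hu hiu ⊢
    grind

end TaylorKoszul

section TaylorHomology

open Finset

variable {V K : Type*} [Field K] {k : ℕ} (gens : Fin k → V →₀ ℕ)

open Classical in
lemma taylorBoundary_apply (T S : Finset (Fin k)) :
    taylorBoundary (K := K) gens T S =
      ∑ t ∈ Sᶜ, if insert t S = T ∧ T.sup gens = S.sup gens then koszulSign K t S else 0 := by
  have hfilter : {t ∈ T | T.erase t = S} = {t ∈ Sᶜ | insert t S = T} := by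
    ext t
    simp only [mem_filter, mem_compl]
    constructor
    · rintro ⟨ht, rfl⟩
      exact ⟨notMem_erase t T, insert_erase ht⟩
    · rintro ⟨ht, rfl⟩
      exact ⟨mem_insert_self t S, erase_insert ht⟩
  have hsign : ∀ t, T.erase t = S → koszulSign K t S = (-1) ^ #{s ∈ T | s < t} := by
    rintro t rfl
    rw [koszulSign, filter_erase, erase_eq_of_notMem (by simp)]
  simp_rw [ite_and]
  rw [← sum_filter, ← hfilter, sum_filter, taylorBoundary, Finsupp.finsetSum_apply]
  refine sum_congr rfl fun t _ => ?_
  simp only [taylorLcm]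
  by_cases ht : T.erase t = S
  · by_cases hlcm : T.sup gens = S.sup gens
    · simp [ht, hlcm, hsign t ht]
    · simp [ht, hlcm, Ne.symm hlcm]
  · by_cases hlcm : (T.erase t).sup gens = T.sup gens <;> simp [ht, hlcm]

lemma taylorDiff_apply (f : Finset (Fin k) →₀ K) (S : Finset (Fin k)) :
    taylorDiff gens f S = boundary K ({T | T.sup gens = S.sup gens}.indicator f) S := by
  classical
  rw [taylorDiff, Finsupp.lsum_apply, Finsupp.sum_fintype _ _ (by simp), Finsupp.finsetSum_apply]
  simp only [LinearMap.toSpanSingleton_apply, Finsupp.smul_apply, smul_eq_mul,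
    taylorBoundary_apply, mul_sum]
  rw [sum_comm, boundary_apply]
  refine sum_congr rfl fun t _ => ?_
  simp only [ite_and, mul_ite, mul_zero, sum_ite_eq, mem_univ, if_true, Set.indicator_apply,
    Set.mem_ofPred_eq]
  split_ifs
  · exact mul_comm _ _
  · rfl

lemma mem_taylorPiece {n j : ℕ} {f : Finset (Fin k) →₀ K} :
    f ∈ taylorPiece gens n j ↔ ⇑f ∈ chains K {T | monomialDegree (T.sup gens) = j} n := by
  have hspan : taylorPiece gens n j = Finsupp.supported K K
      {T : Finset (Fin k) | #T = n ∧ monomialDegree (T.sup gens) = j} := by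
    rw [Finsupp.supported_eq_span_single, taylorPiece]
    congr 1
    ext f
    simp only [taylorLcm, Set.mem_image, Set.mem_ofPred_eq, and_assoc, eq_comm]
  rw [hspan, Finsupp.mem_supported]
  exact forall_congr' fun T => imp_congr Finsupp.mem_support_iff and_comm

lemma exactAt_of_not_taylorHomologyNonzero {n : ℕ} {m : V →₀ ℕ}
    (h : ¬taylorHomologyNonzero (K := K) gens n (monomialDegree m)) :
    ExactAt K {T | T.sup gens = m} n := by
  rw [taylorHomologyNonzero, not_not] at h
  intro z hz hz0
  have hcycle : taylorDiff gens (Finsupp.equivFunOnFinite.symm z) = 0 := by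
    ext S
    rw [taylorDiff_apply, Finsupp.coe_equivFunOnFinite_symm, Finsupp.zero_apply]
    by_cases hS : S.sup gens = m
    · rw [hS, Set.indicator_eq_self.2 fun T hT => (hz T hT).1]
      exact hz0 hS
    · refine boundary_eq_zero fun t _ => Set.indicator_apply_eq_zero.2 fun ht => ?_
      exact eq_zero_of_mem_chains hz fun htm => hS (ht.symm.trans htm)
  obtain ⟨w, hw, hwz⟩ := h ⟨hcycle, (mem_taylorPiece gens).2 <|
    chains_mono (fun T hT => congrArg monomialDegree hT) hz⟩
  refine ⟨_, indicator_mem_chains ((mem_taylorPiece gens).1 hw), ?_⟩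
  rintro S rfl
  rw [← taylorDiff_apply, hwz, Finsupp.coe_equivFunOnFinite_symm]

lemma not_taylorHomologyNonzero_of_exactAt {n j : ℕ}
    (h : ∀ m, monomialDegree m = j → ExactAt K {T | T.sup gens = m} n) :
    ¬taylorHomologyNonzero (K := K) gens n j := by
  rw [taylorHomologyNonzero, not_not]
  rintro f ⟨hf0, hf⟩
  replace hf := (mem_taylorPiece gens).1 hf
  have hexact : ∀ m, ∃ w ∈ chains K {T | T.sup gens = m ∧ monomialDegree m = j} (n + 1),
      Set.EqOn (boundary K w) f {T | T.sup gens = m} := by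
    intro m
    by_cases hm : monomialDegree m = j
    · obtain ⟨w, hw, hwf⟩ := h m hm _ (indicator_mem_chains hf) <| by
        rintro S rfl
        rw [← taylorDiff_apply, hf0]
        rfl
      exact ⟨w, fun T hT => ⟨⟨(hw T hT).1, hm⟩, (hw T hT).2⟩, fun S hS => by
        rw [hwf hS, Set.indicator_of_mem hS]⟩
    · refine ⟨0, zero_mem _, fun S hS => ?_⟩
      rw [map_zero, eq_zero_of_mem_chains hf fun h => hm (hS ▸ h), Pi.zero_apply]
  choose w hw hwf using hexact
  refine ⟨Finsupp.equivFunOnFinite.symm fun T => w (T.sup gens) T,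
    (mem_taylorPiece gens).2 fun T hT => ⟨(hw _ T hT).1.2, (hw _ T hT).2⟩, ?_⟩
  · ext S
    rw [taylorDiff_apply, ← hwf _ rfl]
    refine boundary_congr fun t _ => ?_
    by_cases ht : (insert t S).sup gens = S.sup gens
    · rw [Set.indicator_of_mem (by exact ht), Finsupp.coe_equivFunOnFinite_symm, ht]
    · rw [Set.indicator_of_notMem (by exact ht), eq_zero_of_mem_chains (hw _) fun h => ht h.1]

theorem taylorHomologyNonzero_iff_exists_not_exactAt {n j : ℕ} :
    taylorHomologyNonzero (K := K) gens n j ↔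
      ∃ m, monomialDegree m = j ∧ ¬ExactAt K {T | T.sup gens = m} n := by
  rw [← not_iff_not]
  push Not
  refine ⟨?_, not_taylorHomologyNonzero_of_exactAt gens⟩
  rintro h m rfl
  exact exactAt_of_not_taylorHomologyNonzero gens h

end TaylorHomology

section Hochster

open Finset

variable {V α K : Type*} [LinearOrder V] {D E Q : Set (Finset V)}
  {S U W : Finset V} {n : ℕ}

lemma ordConnected_setOf_subset_and_sdiff_mem (hD : D.OrdConnected) :
    {F | F ⊆ W ∧ W \ F ∈ D}.OrdConnected :=
  ⟨fun _ h₁ _ h₂ _ hF => ⟨hF.2.trans h₂.1,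
    hD.out h₂.2 h₁.2 ⟨sdiff_subset_sdiff subset_rfl hF.2, sdiff_subset_sdiff subset_rfl hF.1⟩⟩⟩

variable [Fintype V] [CommRing K]

lemma exactAt_image_union_iff (hD : ∀ F ∈ D, Disjoint F U) :
    ExactAt K ((· ∪ U) '' D) (n + #U) ↔ ExactAt K D n := by
  have hmap : mapUnion (RelEmbedding.refl (· ≤ ·)) U = (· ∪ U) :=
    funext fun F => congrArg (· ∪ U) map_refl
  rw [← hmap]
  exact exactAt_image_mapUnion_iff fun F hF => (map_refl (s := F)).symm ▸ hD F hF

/-- Exactness of the restriction to `W` of the augmented cochain complex of `D` at the simplices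
with `#W - n` vertices. Simplices are encoded by their complements in `W`, which turns
coboundaries into boundaries; for `D` a simplicial complex this is the vanishing of the reduced
cohomology of `D|_W` in dimension `#W - n - 1`, as it occurs in Hochster's formula. -/
def AcyclicAt (K : Type*) [CommRing K] (D : Set (Finset V)) (W : Finset V) (n : ℕ) : Prop :=
  ExactAt K {F | F ⊆ W ∧ W \ F ∈ D} n

lemma acyclicAt_congr (h : ∀ σ ⊆ W, (σ ∈ D ↔ σ ∈ E)) : AcyclicAt K D W n ↔ AcyclicAt K E W n := by
  simp only [AcyclicAt, h _ sdiff_subset]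

namespace AcyclicAt

lemma of_card_ne (h : ∀ σ ∈ D, σ ⊆ W → #σ + n ≠ #W) : AcyclicAt K D W n :=
  ExactAt.of_card_ne fun F ⟨hFW, hF⟩ hn => h _ hF sdiff_subset <| by
    rw [← hn, card_sdiff_add_card_eq_card hFW]

lemma of_forall_insert {y : V} (hy : y ∈ W)
    (h : ∀ σ ⊆ W, y ∉ σ → (σ ∈ D ↔ insert y σ ∈ D)) : AcyclicAt K D W n := by
  refine ExactAt.of_forall_insert y fun F hyF => ?_
  simp only [Set.mem_ofPred_eq, insert_subset_iff, hy, true_and]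
  refine and_congr_right fun _ => ?_
  rw [h (W \ insert y F) sdiff_subset (by simp)]
  congr! 1
  grind

lemma of_fibers [PartialOrder α] (hD : D.OrdConnected) {ρ : Finset V → α} (hρ : Monotone ρ)
    (h : ∀ a, AcyclicAt K {σ ∈ D | ρ σ = a} W n) : AcyclicAt K D W n := by
  refine ExactAt.of_fibers (α := αᵒᵈ) (ρ := fun F => OrderDual.toDual (ρ (W \ F)))
    (ordConnected_setOf_subset_and_sdiff_mem hD)
    (fun F F' hF => hρ (sdiff_subset_sdiff subset_rfl hF)) fun a => ?_
  have ha := h (OrderDual.ofDual a)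
  simp only [AcyclicAt, Set.mem_ofPred_eq, ← and_assoc] at ha ⊢
  exact ha

lemma inter (hD : D.OrdConnected) (hQ : IsUpperSet Q) (h : AcyclicAt K D W n)
    (hDQ : AcyclicAt K (D \ Q) W (n + 1)) : AcyclicAt K (D ∩ Q) W n := by
  have hL : IsLowerSet {F | W \ F ∈ Q} := fun F F' hF h =>
    hQ (sdiff_subset_sdiff subset_rfl hF) h
  simp only [AcyclicAt, Set.mem_inter_iff, Set.mem_sdiff, ← and_assoc] at hDQ ⊢
  exact ExactAt.inter (ordConnected_setOf_subset_and_sdiff_mem hD) hL h hDQ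

lemma of_forall_card_le (hW : W.Nonempty) (h : ∀ σ ⊆ W, #σ + n ≤ #W + 1 → σ ∈ D) :
    AcyclicAt K D W n := by
  obtain ⟨v, hv⟩ := hW
  refine ExactAt.congr_card (P := {F | F ⊆ W}) (fun F hF _ => ?_)
    (.of_forall_insert v fun F _ => by simp [insert_subset_iff, hv])
  refine (and_iff_left_of_imp fun hFW => h _ sdiff_subset ?_).symm
  have := card_sdiff_add_card_eq_card (show F ⊆ W from hFW)
  omega

lemma setOf_subset (A : Finset V) (hn : n ≠ #W) : AcyclicAt K {σ | σ ⊆ A} W n := by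
  by_cases hA : ∃ y ∈ W, y ∈ A
  · obtain ⟨y, hyW, hyA⟩ := hA
    exact of_forall_insert hyW fun σ _ _ => by simp [insert_subset_iff, hyA]
  · refine of_card_ne fun σ hσA hσW => ?_
    have : σ = ∅ := eq_empty_of_forall_notMem fun y hy => hA ⟨y, hσW hy, hσA hy⟩
    simpa [this]

lemma star (h : S ⊆ W → Disjoint S U → ∀ k, k + #W = n + #S + #(W \ (S ∪ U)) →
      AcyclicAt K D (W \ (S ∪ U)) k) :
    AcyclicAt K {σ | S ⊆ σ ∧ Disjoint σ U ∧ σ \ S ∈ D} W n := by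
  by_cases hS : S ⊆ W ∧ Disjoint S U
  swap
  · exact of_card_ne fun σ hσ hσW => absurd ⟨hσ.1.trans hσW, hσ.2.1.mono_left hσ.1⟩ hS
  have hcard : #(W ∩ U) + #S + #(W \ (S ∪ U)) = #W := by
    rw [← card_union_of_disjoint (hS.2.symm.mono_left inter_subset_right),
      ← card_union_of_disjoint (by grind [disjoint_left])]
    congr 1
    grind
  by_cases hn : #(W ∩ U) ≤ n
  swap
  · refine of_card_ne fun σ hσ hσW => ?_
    have := card_le_card (union_subset hσW (inter_subset_left (s₁ := W) (s₂ := U)))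
    rw [card_union_of_disjoint (hσ.2.1.mono_right inter_subset_right)] at this
    omega
  obtain ⟨k, rfl⟩ := Nat.exists_eq_add_of_le' hn
  have hmap := h hS.1 hS.2 k (by omega)
  rw [AcyclicAt, ← exactAt_image_union_iff (U := W ∩ U) fun F hF => by grind [disjoint_left]]
    at hmap
  unfold AcyclicAt
  convert hmap using 1
  ext F
  constructor
  · rintro ⟨hFW, hSF, hFU, hF⟩
    refine ⟨F \ U, ⟨by grind, ?_⟩, by grind [disjoint_left]⟩
    convert hF using 1
    grind [disjoint_left]
  · rintro ⟨F, ⟨hFY, hF⟩, rfl⟩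
    refine ⟨by grind, by grind [disjoint_left], by grind [disjoint_left], ?_⟩
    convert hF using 1
    grind

lemma restrict {A : Finset V}
    (h : ∀ k, k + #W = n + #(W ∩ A) → AcyclicAt K D (W ∩ A) k) :
    AcyclicAt K {σ ∈ D | σ ⊆ A} W n := by
  have hstar : AcyclicAt K {σ | ∅ ⊆ σ ∧ Disjoint σ Aᶜ ∧ σ \ ∅ ∈ D} W n := star fun _ _ k hk => by
    rw [empty_union, sdiff_compl, inf_eq_inter] at hk ⊢
    exact h k (by simpa using hk)
  simpa [disjoint_compl_right_iff, and_comm] using hstar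

end AcyclicAt

end Hochster

section SquarefreeIdeal

open Finset

variable {V κ K : Type*}

/-- The ideal generated by the squarefree monomials with supports in `A`. -/
noncomputable def squarefreeIdeal (K : Type*) [CommRing K] (A : Set (Finset V)) :
    Ideal (MvPolynomial V K) :=
  Ideal.span ((fun F => ∏ v ∈ F, X v) '' A)

/-- The simplicial complex whose Stanley–Reisner ideal is `squarefreeIdeal K A`. -/
def stanleyReisnerComplex (A : Set (Finset V)) : Set (Finset V) := {σ | ∀ F ∈ A, ¬F ⊆ σ}

lemma notMem_stanleyReisnerComplex {A : Set (Finset V)} {σ : Finset V} :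
    σ ∉ stanleyReisnerComplex A ↔ ∃ F ∈ A, F ⊆ σ := by
  simp [stanleyReisnerComplex]

lemma support_squarefreeExponent (F : Finset V) : (squarefreeExponent F).support = F := by
  classical
  ext v
  simp [squarefreeExponent_apply]

lemma monomialDegree_squarefreeExponent (F : Finset V) :
    monomialDegree (squarefreeExponent F) = #F := by
  classical
  rw [monomialDegree, Finsupp.sum, support_squarefreeExponent, card_eq_sum_ones]
  exact sum_congr rfl fun v hv => by rw [squarefreeExponent_apply, if_pos hv]

lemma support_tsub_squarefreeExponent [DecidableEq V] (W F : Finset V) :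
    (squarefreeExponent W - squarefreeExponent F).support = W \ F := by
  ext v
  simp only [Finsupp.mem_support_iff, Finsupp.tsub_apply, squarefreeExponent_apply, mem_sdiff]
  grind

section CommRing

variable [CommRing K] {A : Set (Finset V)}

lemma prod_X_eq_monomial_squarefreeExponent (F : Finset V) :
    ∏ v ∈ F, X v = monomial (squarefreeExponent F) (1 : K) := by
  classical
  have hsum : squarefreeExponent F = ∑ v ∈ F, Finsupp.single v 1 := by
    ext v
    simp [squarefreeExponent_apply, Finsupp.single_apply]
  rw [hsum, monomial_sum_one]
  rfl

lemma monomial_mem_squarefreeIdeal_iff [Nontrivial K] {c : V →₀ ℕ} :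
    monomial c (1 : K) ∈ squarefreeIdeal K A ↔ ∃ F ∈ A, F ⊆ c.support := by
  classical
  have himage : (fun F => ∏ v ∈ F, X v) '' A =
      (fun m => monomial m (1 : K)) '' (squarefreeExponent '' A) := by
    simp only [Set.image_image, prod_X_eq_monomial_squarefreeExponent]
  rw [squarefreeIdeal, himage, mem_ideal_span_monomial_image, support_monomial,
    if_neg one_ne_zero]
  simp [squarefreeExponent_le_iff]

lemma monomial_mem_monomialSpan_iff [Nontrivial K] {k : ℕ} {gens : Fin k → V →₀ ℕ} {c : V →₀ ℕ} :
    monomial c (1 : K) ∈ monomialSpan gens ↔ ∃ i, gens i ≤ c := by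
  classical
  rw [monomialSpan, Set.range_comp' (fun m => monomial m (1 : K)) gens,
    mem_ideal_span_monomial_image, support_monomial, if_neg one_ne_zero]
  simp

lemma exists_squarefreeIdeal_eq_monomialSpan [Finite V] (A : Set (Finset V)) :
    ∃ (k : ℕ) (gens : Fin k → V →₀ ℕ), squarefreeIdeal K A = monomialSpan gens := by
  obtain ⟨k, f, -, rfl⟩ := A.toFinite.fin_param
  refine ⟨k, fun i => squarefreeExponent (f i), ?_⟩
  simp only [squarefreeIdeal, monomialSpan, prod_X_eq_monomial_squarefreeExponent,
    ← Set.range_comp']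

theorem exactAt_sup_eq_of_one_lt [Finite V] [LinearOrder κ] [Fintype κ] {gens : κ → V →₀ ℕ}
    (h : ∀ c, (∃ i, gens i ≤ c) ↔ ∃ F ∈ A, F ⊆ c.support) {m : V →₀ ℕ} {v : V} (hv : 1 < m v)
    {n : ℕ} : ExactAt K {T | T.sup gens = m} n := by
  cases nonempty_fintype V
  let _ : LinearOrder V := .lift' (Fintype.equivFin V) (Equiv.injective _)
  rw [← exactAt_taylorKoszulFamily_iff_taylor, exactAt_taylorKoszulFamily_iff_koszul]
  refine .of_forall_insert v fun F _ => ?_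
  have hsupp : (m - squarefreeExponent (insert v F)).support =
      (m - squarefreeExponent F).support := by
    ext u
    simp only [Finsupp.mem_support_iff, Finsupp.tsub_apply, squarefreeExponent_apply, mem_insert]
    grind
  have hvm : v ∈ m.support := Finsupp.mem_support_iff.2 (by omega)
  simp only [Set.mem_ofPred_eq, h, hsupp, squarefreeExponent_le_iff, insert_subset_iff, hvm,
    true_and]

end CommRing

section Hochster

variable [LinearOrder V] [Fintype V] {A : Set (Finset V)} {W : Finset V} {n : ℕ}

section Generators

variable [LinearOrder κ] [Fintype κ] [CommRing K] {gens : κ → V →₀ ℕ}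

theorem exactAt_sup_eq_squarefreeExponent_iff
    (h : ∀ c, (∃ i, gens i ≤ c) ↔ ∃ F ∈ A, F ⊆ c.support) :
    ExactAt K {T | T.sup gens = squarefreeExponent W} n ↔
      AcyclicAt K (stanleyReisnerComplex A) W n := by
  rw [← exactAt_taylorKoszulFamily_iff_taylor, exactAt_taylorKoszulFamily_iff_koszul, AcyclicAt]
  simp only [and_comm]
  congr! with F
  · rw [squarefreeExponent_le_iff, support_squarefreeExponent]
  · rw [h, support_tsub_squarefreeExponent, ← notMem_stanleyReisnerComplex, not_not]

lemma acyclicAt_stanleyReisnerComplex_of_mul_lt {d : ℕ} (hA : ∀ F ∈ A, #F ≤ d) (hW : d * n < #W) :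
    AcyclicAt K (stanleyReisnerComplex A) W n := by
  obtain ⟨k, f, -, rfl⟩ := A.toFinite.fin_param
  rw [← exactAt_sup_eq_squarefreeExponent_iff (gens := fun i => squarefreeExponent (f i))
    fun c => by simp [squarefreeExponent_le_iff]]
  refine .of_card_ne fun T hT hTn => hW.not_ge ?_
  have hWT : W ⊆ T.biUnion f := by
    rw [← support_squarefreeExponent (T.biUnion f), ← squarefreeExponent_le_iff,
      ← show T.sup _ = _ from hT]
    exact Finset.sup_le fun i hi => squarefreeExponent_mono (subset_biUnion_of_mem f hi)
  calc #W ≤ #(T.biUnion f) := card_le_card hWT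
    _ ≤ #T * d := card_biUnion_le_card_mul _ _ _ fun i _ => hA _ ⟨i, rfl⟩
    _ = d * n := by rw [hTn, mul_comm]

end Generators

theorem taylorHomologyNonzero_iff_exists_not_acyclicAt [Field K] {k j : ℕ}
    {gens : Fin k → V →₀ ℕ} (h : ∀ c, (∃ i, gens i ≤ c) ↔ ∃ F ∈ A, F ⊆ c.support) :
    taylorHomologyNonzero (K := K) gens n j ↔
      ∃ W, #W = j ∧ ¬AcyclicAt K (stanleyReisnerComplex A) W n := by
  rw [taylorHomologyNonzero_iff_exists_not_exactAt]
  constructor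
  · rintro ⟨m, rfl, hm⟩
    have hm1 : squarefreeExponent m.support = m := by
      ext v
      rw [squarefreeExponent_apply]
      have : ¬1 < m v := fun hv => hm (exactAt_sup_eq_of_one_lt h hv)
      grind
    refine ⟨m.support, ?_, ?_⟩
    · rw [← monomialDegree_squarefreeExponent, hm1]
    · rwa [← exactAt_sup_eq_squarefreeExponent_iff h, hm1]
  · rintro ⟨W, rfl, hW⟩
    exact ⟨squarefreeExponent W, monomialDegree_squarefreeExponent W,
      by rwa [exactAt_sup_eq_squarefreeExponent_iff h]⟩

/-- Hochster's formula. -/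
theorem idealTorNonzero_squarefreeIdeal_iff [Field K] {i j : ℕ} :
    IdealTorNonzero (squarefreeIdeal K A) i j ↔
      ∃ W, #W = j ∧ ¬AcyclicAt K (stanleyReisnerComplex A) W (i + 1) := by
  have hgens : ∀ {k : ℕ} {gens : Fin k → V →₀ ℕ}, squarefreeIdeal K A = monomialSpan gens →
      ∀ c, (∃ i, gens i ≤ c) ↔ ∃ F ∈ A, F ⊆ c.support := fun h c => by
    rw [← monomial_mem_monomialSpan_iff (K := K), ← h, monomial_mem_squarefreeIdeal_iff]
  constructor
  · rintro ⟨k, gens, h, hnz⟩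
    exact (taylorHomologyNonzero_iff_exists_not_acyclicAt (hgens h)).1 hnz
  · intro hW
    obtain ⟨k, gens, h⟩ := exists_squarefreeIdeal_eq_monomialSpan (K := K) A
    exact ⟨k, gens, h, (taylorHomologyNonzero_iff_exists_not_acyclicAt (hgens h)).2 hW⟩

end Hochster

end SquarefreeIdeal

section GraphIdeals

open Finset

variable {V K : Type*} {G : SimpleGraph V}

/-- The simplicial complex of the independent sets of vertices of `G`. -/
def independenceComplex (G : SimpleGraph V) : Set (Finset V) := {σ | G.IsIndepSet σ}

/-- The simplicial complex of the sets of vertices in which any two edges of `G` have a common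
endpoint. For gap-free `G` it is the Stanley–Reisner complex of the `4`-path ideal. -/
def intersectingEdgeComplex (G : SimpleGraph V) : Set (Finset V) :=
  {σ | ∀ a ∈ σ, ∀ b ∈ σ, ∀ c ∈ σ, ∀ d ∈ σ, G.Adj a b → G.Adj c d → a = c ∨ a = d ∨ b = c ∨ b = d}

lemma isLowerSet_independenceComplex : IsLowerSet (independenceComplex G) :=
  fun _ _ hle h => h.mono (coe_subset.2 hle)

lemma independenceComplex_subset_intersectingEdgeComplex :
    independenceComplex G ⊆ intersectingEdgeComplex G := by
  intro σ hσ a ha b hb _ _ _ _ hab _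
  exact absurd hab (hσ ha hb hab.ne)

lemma isLowerSet_intersectingEdgeComplex : IsLowerSet (intersectingEdgeComplex G) :=
  fun _ _ hle h a ha b hb c hc d hd => h a (hle ha) b (hle hb) c (hle hc) d (hle hd)

lemma isPathList_four {a b c d : V} :
    G.IsPathList [a, b, c, d] ↔
      G.Adj a b ∧ G.Adj b c ∧ G.Adj c d ∧ a ≠ c ∧ a ≠ d ∧ b ≠ d := by
  have hne := @G.ne_of_adj
  have hchain : G.IsPathList [a, b, c, d] ↔
      [a, b, c, d].IsChain G.Adj ∧ [a, b, c, d].Nodup := Iff.rfl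
  simp only [hchain, List.isChain_cons_cons, List.isChain_singleton, List.nodup_cons,
    List.mem_cons, List.not_mem_nil, not_or, List.nodup_nil]
  grind

variable [DecidableEq V]

lemma edgeIdeal_eq_squarefreeIdeal [CommRing K] :
    edgeIdeal (K := K) G = squarefreeIdeal K {F | ∃ u v, G.Adj u v ∧ {u, v} = F} := by
  rw [edgeIdeal, squarefreeIdeal]
  congr 1
  ext q
  constructor
  · rintro ⟨u, v, huv, rfl⟩
    exact ⟨{u, v}, ⟨u, v, huv, rfl⟩, prod_pair huv.ne⟩
  · rintro ⟨_, ⟨u, v, huv, rfl⟩, rfl⟩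
    exact ⟨u, v, huv, prod_pair huv.ne⟩

lemma pathIdeal_eq_squarefreeIdeal [CommRing K] (t : ℕ) :
    pathIdeal (K := K) G t =
      squarefreeIdeal K {F | ∃ l, G.IsPathList l ∧ l.length = t ∧ l.toFinset = F} := by
  rw [pathIdeal, squarefreeIdeal]
  congr 1
  ext q
  constructor
  · rintro ⟨l, hl, ht, rfl⟩
    exact ⟨l.toFinset, ⟨l, hl, ht, rfl⟩, List.prod_toFinset X hl.2⟩
  · rintro ⟨_, ⟨l, hl, ht, rfl⟩, rfl⟩
    exact ⟨l, hl, ht, List.prod_toFinset X hl.2⟩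

lemma stanleyReisnerComplex_edges :
    stanleyReisnerComplex {F | ∃ u v, G.Adj u v ∧ {u, v} = F} = independenceComplex G := by
  ext σ
  constructor
  · intro h u hu v hv _ huv
    exact h _ ⟨u, v, huv, rfl⟩ (by simp [insert_subset_iff, mem_coe.1 hu, mem_coe.1 hv])
  · rintro h _ ⟨u, v, huv, rfl⟩ hσ
    exact h (hσ (by simp)) (hσ (by simp)) huv.ne huv

theorem stanleyReisnerComplex_fourPaths (hG : G.GapFree) :
    stanleyReisnerComplex {F | ∃ l, G.IsPathList l ∧ l.length = 4 ∧ l.toFinset = F} =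
      intersectingEdgeComplex G := by
  ext σ
  constructor
  · intro h a ha b hb c hc d hd hab hcd
    have hpath : ∀ x y z w, G.IsPathList [x, y, z, w] → x ∈ σ → y ∈ σ → z ∈ σ → w ∈ σ → False :=
      fun x y z w hl hx hy hz hw => h _ ⟨[x, y, z, w], hl, rfl, rfl⟩ (by
        simp [insert_subset_iff, hx, hy, hz, hw])
    by_contra! hne
    obtain ⟨hac, had, hbc, hbd⟩ := hne
    rcases hG a b c d hab hcd hac had hbc hbd with h | h | h | h
    · exact hpath b a c d (isPathList_four.2 ⟨hab.symm, h, hcd, hbc, hbd, had⟩) hb ha hc hd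
    · exact hpath b a d c (isPathList_four.2 ⟨hab.symm, h, hcd.symm, hbd, hbc, hac⟩) hb ha hd hc
    · exact hpath a b c d (isPathList_four.2 ⟨hab, h, hcd, hac, had, hbd⟩) ha hb hc hd
    · exact hpath a b d c (isPathList_four.2 ⟨hab, h, hcd.symm, had, hac, hbc⟩) ha hb hd hc
  · rintro h _ ⟨l, hl, hlen, rfl⟩ hσ
    obtain ⟨a, b, c, d, rfl⟩ := List.length_eq_four.1 hlen
    obtain ⟨hab, hbc, hcd, hac, had, hbd⟩ := isPathList_four.1 hl
    have := h a (hσ (by simp)) b (hσ (by simp)) c (hσ (by simp)) d (hσ (by simp)) hab hcd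
    simp [hac, had, hbc.ne, hbd] at this

end GraphIdeals

section EdgeLink

open Finset

variable {V K : Type*} {G : SimpleGraph V} {u v : V}

/-- The link of the edge `uv` in `intersectingEdgeComplex G`, on vertices other than `u` and `v`. -/
def edgeLink (G : SimpleGraph V) (u v : V) : Set (Finset V) :=
  {τ ∈ independenceComplex G | ∀ x ∈ τ, ∀ y ∈ τ, G.Adj u x → G.Adj v y → x = y}

lemma isLowerSet_edgeLink : IsLowerSet (edgeLink G u v) :=
  fun _ _ hle h => ⟨isLowerSet_independenceComplex hle h.1,
    fun x hx y hy => h.2 x (hle hx) y (hle hy)⟩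

/-- The blocks of the partition of the neighbours of `u` or `v` by this function are the vertices
adjacent to `u` only, those adjacent to `v` only, and the singletons of common neighbours. -/
def neighborLabel (G : SimpleGraph V) (u v x : V) : Prop × Set V :=
  (G.Adj u x, {x} ∩ G.commonNeighbors u v)

lemma neighborLabel_eq_iff {x y : V} (hx : G.Adj u x ∨ G.Adj v x) (hy : G.Adj u y ∨ G.Adj v y) :
    neighborLabel G u v x = neighborLabel G u v y ↔
      (G.Adj u x → G.Adj v y → x = y) ∧ (G.Adj u y → G.Adj v x → y = x) := by
  simp only [neighborLabel, Prod.mk.injEq, eq_iff_iff, Set.ext_iff, Set.mem_inter_iff,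
    Set.mem_singleton_iff, SimpleGraph.mem_commonNeighbors]
  constructor
  · rintro ⟨h, hxy⟩
    have := hxy x
    have := hxy y
    grind
  · rintro ⟨hxy, hyx⟩
    by_cases x = y <;> grind

/-- The labels of the neighbours of `u` or `v` in `τ`. -/
def neighborLabels (G : SimpleGraph V) (u v : V) (τ : Finset V) : Set (Prop × Set V) :=
  neighborLabel G u v '' {x ∈ τ | G.Adj u x ∨ G.Adj v x}

lemma neighborLabels_mono : Monotone (neighborLabels G u v) :=
  fun _ _ hle => Set.image_mono fun _ hx => ⟨hle hx.1, hx.2⟩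

lemma neighborLabels_subset_iff {τ : Finset V} {L : Set (Prop × Set V)} :
    neighborLabels G u v τ ⊆ L ↔
      ∀ x ∈ τ, G.Adj u x ∨ G.Adj v x → neighborLabel G u v x ∈ L := by
  simp only [neighborLabels, Set.image_subset_iff]
  exact ⟨fun h x hx hxN => h ⟨hx, hxN⟩, fun h x hx => h x hx.1 hx.2⟩

lemma neighborLabels_eq_empty_iff {τ : Finset V} :
    neighborLabels G u v τ = ∅ ↔ ∀ x ∈ τ, ¬G.Adj u x ∧ ¬G.Adj v x := by
  simp only [← Set.subset_empty_iff, neighborLabels_subset_iff, Set.mem_empty_iff_false, not_or,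
    imp_false]

lemma mem_edgeLink_iff {τ : Finset V} :
    τ ∈ edgeLink G u v ↔ τ ∈ independenceComplex G ∧ (neighborLabels G u v τ).Subsingleton := by
  refine and_congr_right fun _ => ?_
  simp only [neighborLabels, Set.Subsingleton, Set.forall_mem_image]
  constructor
  · exact fun h x hx y hy =>
      (neighborLabel_eq_iff hx.2 hy.2).2 ⟨h x hx.1 y hy.1, h y hy.1 x hx.1⟩
  · exact fun h x hx y hy hux hvy => ((neighborLabel_eq_iff (.inl hux) (.inr hvy)).1
      (h ⟨hx, .inl hux⟩ ⟨hy, .inr hvy⟩)).1 hux hvy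

lemma mem_independenceComplex_of_gapFree (hG : G.GapFree) (huv : G.Adj u v) {τ : Finset V}
    (hu : u ∉ τ) (hv : v ∉ τ) (hτ : ∀ x ∈ τ, ¬G.Adj u x ∧ ¬G.Adj v x) :
    τ ∈ independenceComplex G := by
  intro x hx y hy _ hxy
  have hne : ∀ w ∈ τ, u ≠ w ∧ v ≠ w := fun w hw =>
    ⟨(ne_of_mem_of_not_mem hw hu).symm, (ne_of_mem_of_not_mem hw hv).symm⟩
  rcases hG u v x y huv hxy (hne x hx).1 (hne y hy).1 (hne x hx).2 (hne y hy).2 with h | h | h | h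
  exacts [(hτ x hx).1 h, (hτ y hy).1 h, (hτ x hx).2 h, (hτ y hy).2 h]

variable [LinearOrder V] [Fintype V] [CommRing K] {Y : Finset V} {n : ℕ}

lemma acyclicAt_neighborLabels_eq_empty (hG : G.GapFree) (huv : G.Adj u v) (hu : u ∉ Y) (hv : v ∉ Y)
    (hn : n ≠ #Y) :
    AcyclicAt K {τ ∈ independenceComplex G | neighborLabels G u v τ = ∅} Y n := by
  classical
  let Z : Finset V := {x | ¬G.Adj u x ∧ ¬G.Adj v x}
  refine (acyclicAt_congr fun σ hσ => ?_).1 (AcyclicAt.setOf_subset (K := K) Z hn)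
  have hσZ : σ ⊆ Z ↔ neighborLabels G u v σ = ∅ := by
    simp [Z, subset_iff, neighborLabels_eq_empty_iff]
  refine hσZ.trans (and_iff_right_of_imp fun h => ?_).symm
  exact mem_independenceComplex_of_gapFree hG huv (fun h => hu (hσ h)) (fun h => hv (hσ h))
    (neighborLabels_eq_empty_iff.1 h)

lemma acyclicAt_neighborLabels_eq_singleton (hG : G.GapFree) (huv : G.Adj u v)
    (hlin : ∀ X k, k ≤ n → k + 2 ≤ #X → AcyclicAt K (independenceComplex G) X k)
    (hu : u ∉ Y) (hv : v ∉ Y) (hn : n + 2 ≤ #Y) (a : Prop × Set V) :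
    AcyclicAt K {τ ∈ independenceComplex G | neighborLabels G u v τ = {a}} Y n := by
  classical
  let A : Finset V := {x | G.Adj u x ∨ G.Adj v x → neighborLabel G u v x = a}
  have hA : ∀ τ, τ ⊆ A ↔ neighborLabels G u v τ ⊆ {a} := fun τ => by
    simp only [neighborLabels_subset_iff, A, subset_iff, mem_filter_univ, Set.mem_singleton_iff]
  have hDA : AcyclicAt K {τ ∈ independenceComplex G | τ ⊆ A} Y n :=
    .restrict fun k hk => hlin _ k (by grind [card_le_card (inter_subset_left (s₁ := Y) (s₂ := A))])
      (by omega)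
  have hempty : AcyclicAt K {τ ∈ independenceComplex G | neighborLabels G u v τ = ∅} Y (n + 1) :=
    acyclicAt_neighborLabels_eq_empty hG huv hu hv (by omega)
  have hne : AcyclicAt K ({τ ∈ independenceComplex G | τ ⊆ A} ∩
      {τ | (neighborLabels G u v τ).Nonempty}) Y n := by
    refine hDA.inter
      (isLowerSet_independenceComplex.inter fun _ _ => Subset.trans).ordConnected
      (fun _ _ hle h => h.mono (neighborLabels_mono hle)) ?_
    refine (acyclicAt_congr fun σ _ => ?_).1 hempty
    simp only [Set.mem_sdiff, Set.mem_ofPred_eq, hA, Set.not_nonempty_iff_eq_empty, and_assoc]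
    grind
  refine (acyclicAt_congr fun σ _ => ?_).1 hne
  simp only [Set.mem_inter_iff, Set.mem_ofPred_eq, hA, Set.subset_singleton_iff_eq,
    Set.nonempty_iff_ne_empty, and_assoc]
  grind [Set.singleton_ne_empty]

theorem acyclicAt_edgeLink (hG : G.GapFree) (huv : G.Adj u v)
    (hlin : ∀ X k, k ≤ n → k + 2 ≤ #X → AcyclicAt K (independenceComplex G) X k)
    (hu : u ∉ Y) (hv : v ∉ Y) (hn : n + 2 ≤ #Y) : AcyclicAt K (edgeLink G u v) Y n := by
  refine .of_fibers isLowerSet_edgeLink.ordConnected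
    (neighborLabels_mono (G := G) (u := u) (v := v)) fun L => ?_
  simp only [mem_edgeLink_iff, and_assoc]
  by_cases hL : L.Subsingleton
  · have hfiber : {τ | τ ∈ independenceComplex G ∧ (neighborLabels G u v τ).Subsingleton ∧
        neighborLabels G u v τ = L} =
        {τ ∈ independenceComplex G | neighborLabels G u v τ = L} := by
      grind
    rw [hfiber]
    obtain rfl | ⟨a, rfl⟩ := hL.eq_empty_or_singleton
    · exact acyclicAt_neighborLabels_eq_empty hG huv hu hv (by omega)
    · exact acyclicAt_neighborLabels_eq_singleton hG huv hlin hu hv hn a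
  · exact .of_card_ne fun τ hτ => absurd (hτ.2.2 ▸ hτ.2.1) hL

end EdgeLink

section LastEdge

open Finset

variable {V K : Type*} {G : SimpleGraph V} {σ : Finset V} {u v : V} [LinearOrder V]

lemma mem_intersectingEdgeComplex_of_card_le_three (hσ : #σ ≤ 3) :
    σ ∈ intersectingEdgeComplex G := by
  intro a ha b hb c hc d hd hab hcd
  by_contra! h
  have h4 : #{a, b, c, d} = 4 := by
    grind [hab.ne, hcd.ne]
  have := card_le_card (show {a, b, c, d} ⊆ σ by grind)
  omega

lemma sdiff_mem_edgeLink (huv : G.Adj u v) (hu : u ∈ σ) (hv : v ∈ σ)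
    (hσ : σ ∈ intersectingEdgeComplex G) : σ \ {u, v} ∈ edgeLink G u v := by
  refine ⟨fun x hx y hy _ hxy => ?_, fun x hx y hy hux hvy => ?_⟩
  · have := hσ u hu v hv x (mem_sdiff.1 hx).1 y (mem_sdiff.1 hy).1 huv hxy
    grind
  · have := hσ u hu x (mem_sdiff.1 hx).1 v hv y (mem_sdiff.1 hy).1 hux hvy
    grind [huv.ne]

lemma mem_intersectingEdgeComplex_of_sdiff_mem_edgeLink (hσ : σ \ {u, v} ∈ edgeLink G u v) :
    σ ∈ intersectingEdgeComplex G := by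
  have hindep : ∀ x ∈ σ, ∀ y ∈ σ, G.Adj x y → x = u ∨ x = v ∨ y = u ∨ y = v := by
    intro x hx y hy hxy
    by_contra! h
    exact hσ.1 (x := x) (by grind) (y := y) (by grind) hxy.ne hxy
  have hlink : ∀ x ∈ σ, ∀ y ∈ σ, G.Adj u x → G.Adj v y → x = v ∨ y = u ∨ x = y := by
    intro x hx y hy hux hvy
    by_contra! h
    exact h.2.2 (hσ.2 x (by grind [hux.ne]) y (by grind [hvy.ne]) hux hvy)
  intro a ha b hb c hc d hd hab hcd
  have := hindep a ha b hb hab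
  have := hindep c hc d hd hcd
  have := G.adj_comm
  grind

variable [Fintype V]

open Classical in
/-- The edges of `G` with both endpoints in `σ`, each taken in both directions. -/
noncomputable def dartsIn (G : SimpleGraph V) (σ : Finset V) : Finset (V ×ₗ V) :=
  {e | (ofLex e).1 ∈ σ ∧ (ofLex e).2 ∈ σ ∧ G.Adj (ofLex e).1 (ofLex e).2}

lemma mem_dartsIn {x y : V} :
    toLex (x, y) ∈ dartsIn G σ ↔ x ∈ σ ∧ y ∈ σ ∧ G.Adj x y := by
  simp [dartsIn]

lemma dartsIn_mono : Monotone (dartsIn G) := fun _ _ hle => by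
  intro e he
  rw [← toLex_ofLex e] at *
  exact mem_dartsIn.2 ⟨hle (mem_dartsIn.1 he).1, hle (mem_dartsIn.1 he).2.1, (mem_dartsIn.1 he).2.2⟩

lemma dartsIn_eq_empty_iff : dartsIn G σ = ∅ ↔ σ ∈ independenceComplex G := by
  constructor
  · intro h x hx y hy _ hxy
    exact notMem_empty (toLex (x, y)) (h ▸ mem_dartsIn.2 ⟨hx, hy, hxy⟩)
  · refine fun h => eq_empty_of_forall_notMem fun e he => ?_
    rw [← toLex_ofLex e] at he
    obtain ⟨hx, hy, hxy⟩ := mem_dartsIn.1 he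
    exact h hx hy hxy.ne hxy

lemma max_dartsIn_eq_coe_iff :
    (dartsIn G σ).max = toLex (u, v) ↔
      (u ∈ σ ∧ v ∈ σ ∧ G.Adj u v) ∧
        ∀ x ∈ σ, ∀ y ∈ σ, G.Adj x y → toLex (x, y) ≤ toLex (u, v) := by
  constructor
  · exact fun h => ⟨mem_dartsIn.1 (mem_of_max h), fun x hx y hy hxy =>
      le_max_of_eq (mem_dartsIn.2 ⟨hx, hy, hxy⟩) h⟩
  · rintro ⟨he, hmax⟩
    refine le_antisymm (Finset.max_le fun e he => ?_) (le_max (mem_dartsIn.2 he))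
    rw [← toLex_ofLex e] at he
    obtain ⟨hx, hy, hxy⟩ := mem_dartsIn.1 he
    exact WithBot.coe_le_coe.2 (hmax _ hx _ hy hxy)

open Classical in
/-- The vertices forming with `u` or `v` an edge which, in one of its two directions, comes after
`(u, v)`. -/
noncomputable def laterEdgeVertices (G : SimpleGraph V) (u v : V) : Finset V :=
  {x | ∃ w, (w = u ∨ w = v) ∧ G.Adj w x ∧
    (toLex (u, v) < toLex (w, x) ∨ toLex (u, v) < toLex (x, w))}

lemma disjoint_laterEdgeVertices_iff :
    Disjoint σ (laterEdgeVertices G u v) ↔ ∀ x ∈ σ, ∀ w, (w = u ∨ w = v) → G.Adj w x →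
      toLex (w, x) ≤ toLex (u, v) ∧ toLex (x, w) ≤ toLex (u, v) := by
  simp only [disjoint_left, laterEdgeVertices, mem_filter_univ, not_exists, not_and, not_or, not_lt]

lemma setOf_max_dartsIn_eq_coe (huv : G.Adj u v) :
    {σ ∈ intersectingEdgeComplex G | (dartsIn G σ).max = toLex (u, v)} =
      {σ | {u, v} ⊆ σ ∧ Disjoint σ (laterEdgeVertices G u v) ∧ σ \ {u, v} ∈ edgeLink G u v} := by
  ext σ
  simp only [Set.mem_ofPred_eq, max_dartsIn_eq_coe_iff, disjoint_laterEdgeVertices_iff,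
    insert_subset_iff, singleton_subset_iff]
  constructor
  · rintro ⟨hσ, ⟨hu, hv, -⟩, hmax⟩
    refine ⟨⟨hu, hv⟩, fun x hx w hw hwx => ?_, sdiff_mem_edgeLink huv hu hv hσ⟩
    have hwσ : w ∈ σ := by rcases hw with rfl | rfl <;> assumption
    exact ⟨hmax w hwσ x hx hwx, hmax x hx w hwσ hwx.symm⟩
  · rintro ⟨⟨hu, hv⟩, hlater, hσ⟩
    have hmem := mem_intersectingEdgeComplex_of_sdiff_mem_edgeLink hσ
    refine ⟨hmem, ⟨hu, hv, huv⟩, fun x hx y hy hxy => ?_⟩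
    obtain rfl | rfl | rfl | rfl := hmem u hu v hv x hx y hy huv hxy
    · exact (hlater y hy _ (.inl rfl) hxy).1
    · exact (hlater x hx _ (.inl rfl) hxy.symm).2
    · exact (hlater y hy _ (.inr rfl) hxy).1
    · exact (hlater x hx _ (.inr rfl) hxy.symm).2

variable [CommRing K] {W : Finset V} {n : ℕ}

theorem acyclicAt_intersectingEdgeComplex_of_add_four_le (hG : G.GapFree)
    (hlin : ∀ X k, k ≤ n → k + 2 ≤ #X → AcyclicAt K (independenceComplex G) X k)
    (hW : n + 4 ≤ #W) : AcyclicAt K (intersectingEdgeComplex G) W n := by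
  refine .of_fibers isLowerSet_intersectingEdgeComplex.ordConnected
    (ρ := fun σ => (dartsIn G σ).max) (fun _ _ hle => max_mono (dartsIn_mono hle)) fun e => ?_
  induction e using WithBot.recBotCoe with
  | bot =>
    refine (acyclicAt_congr fun σ _ => ?_).1 (hlin W n le_rfl (by omega))
    rw [Set.mem_ofPred_eq, Finset.max_eq_bot, dartsIn_eq_empty_iff]
    exact (and_iff_right_of_imp fun h => independenceComplex_subset_intersectingEdgeComplex h).symm
  | coe e =>
    obtain ⟨⟨u, v⟩, rfl⟩ := toLex.surjective e
    by_cases huv : G.Adj u v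
    · rw [setOf_max_dartsIn_eq_coe huv]
      refine .star fun hS _ k hk => ?_
      have hpair := card_pair huv.ne
      have := card_sdiff_add_card_eq_card hS
      have := card_le_card
        (sdiff_subset_sdiff (subset_refl W) (subset_union_left (s₁ := {u, v})
          (s₂ := laterEdgeVertices G u v)))
      exact acyclicAt_edgeLink hG huv (fun X l hl => hlin X l (by omega)) (by simp) (by simp)
        (by omega)
    · exact .of_card_ne fun σ hσ => absurd (max_dartsIn_eq_coe_iff.1 hσ.2).1.2.2 huv

theorem acyclicAt_intersectingEdgeComplex (hG : G.GapFree) (hn : 2 ≤ n)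
    (hlin : ∀ X k, k ≤ n → k + 2 ≤ #X → AcyclicAt K (independenceComplex G) X k)
    (hW : #W ≠ n + 3) : AcyclicAt K (intersectingEdgeComplex G) W n := by
  obtain hW | hW : n + 4 ≤ #W ∨ #W ≤ n + 2 := by omega
  · exact acyclicAt_intersectingEdgeComplex_of_add_four_le hG hlin hW
  obtain rfl | hne := W.eq_empty_or_nonempty
  · exact .of_card_ne fun σ _ _ => by rw [card_empty]; omega
  · exact .of_forall_card_le hne fun σ _ hσ =>
      mem_intersectingEdgeComplex_of_card_le_three (by omega)

end LastEdge

section Linearity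

open Finset

variable {V K : Type*} [Field K] {G : SimpleGraph V} {p : ℕ}

lemma acyclicAt_independenceComplex [LinearOrder V] [Fintype V]
    (hlin : ∀ i j : ℕ, 1 ≤ i → i ≤ p → j ≠ i + 2 → ¬IdealTorNonzero (edgeIdeal (K := K) G) i j)
    {X : Finset V} {n : ℕ} (hn : n ≤ p + 1) (hX : n + 2 ≤ #X) :
    AcyclicAt K (independenceComplex G) X n := by
  rw [← stanleyReisnerComplex_edges]
  obtain hn1 | hn1 := le_or_gt n 1
  · refine acyclicAt_stanleyReisnerComplex_of_mul_lt (d := 2) ?_ (by omega)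
    rintro _ ⟨u, v, -, rfl⟩
    exact card_le_two
  · obtain ⟨i, rfl⟩ := Nat.exists_eq_add_of_le' hn1.le
    have := hlin i #X (by omega) (by omega) (by omega)
    rw [edgeIdeal_eq_squarefreeIdeal, idealTorNonzero_squarefreeIdeal_iff] at this
    by_contra h
    exact this ⟨X, rfl, h⟩

theorem stmt7_general [Finite V] (hG : G.GapFree)
    (hlin : ∀ i j : ℕ, 1 ≤ i → i ≤ p → j ≠ i + 2 → ¬IdealTorNonzero (edgeIdeal (K := K) G) i j)
    (i j : ℕ) (hi : 1 ≤ i) (hip : i ≤ p) (hj : j ≠ i + 4) :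
    ¬IdealTorNonzero (pathIdeal (K := K) G 4) i j := by
  cases nonempty_fintype V
  let _ : LinearOrder V := .lift' (Fintype.equivFin V) (Equiv.injective _)
  rw [pathIdeal_eq_squarefreeIdeal, idealTorNonzero_squarefreeIdeal_iff,
    stanleyReisnerComplex_fourPaths hG]
  rintro ⟨W, rfl, hW⟩
  exact hW (acyclicAt_intersectingEdgeComplex hG (by omega)
    (fun X k hk => acyclicAt_independenceComplex hlin (by omega)) (by omega))

end Linearity

/-- If `G` is gap-free with `I_4(G) ≠ 0` and the minimal free resolution
of `I(G)` is linear up to step `p ≥ 2` (`Tor_i(I(G),K)_j = 0` for `1 ≤ i ≤ p`,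
`j ≠ i + 2`), then the minimal free resolution of `I_4(G)` is linear up to step `p`
(`Tor_i(I_4(G),K)_j = 0` for `1 ≤ i ≤ p`, `j ≠ i + 4`). -/
theorem stmt7 {V K : Type*} [Fintype V] [Field K] (G : SimpleGraph V)
    (hgap : G.GapFree) (h4 : pathIdeal (K := K) G 4 ≠ ⊥)
    (p : ℕ) (hp : 2 ≤ p)
    (hlin : ∀ i j : ℕ, 1 ≤ i → i ≤ p → j ≠ i + 2 →
      ¬ IdealTorNonzero (edgeIdeal (K := K) G) i j) :
    ∀ i j : ℕ, 1 ≤ i → i ≤ p → j ≠ i + 4 →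
      ¬ IdealTorNonzero (pathIdeal (K := K) G 4) i j :=
  stmt7_general hgap hlin
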